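/- Let d ≥ 2, c > 0 and κ ≥ 1. There exists a constant C > 0 such that for every Schwartz function f on ℝ^d, every λ ∈ ℕ with λ ≥ κ + 1, every t ∈ ℝ with |t| ≥ cλ, every choice of sign ±, and every p ∈ [2,∞], ‖F⁻¹(ξ ↦ e^{±i t |ξ|} ζ_{κ,λ}(ξ) (F f)(ξ))‖_{L^p(ℝ^d)} ≤ C (|t|/λ)^{−((d−1)/2)(1 − 2/p)} ‖Q_{κ,λ} f‖_{L^{p'}(ℝ^d)}, where p' = p/(p−1) is the conjugate exponent. (The left-hand side is the half-wave evolution e^{±it|∇|} Q_{κ,λ} f.) -/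

import Mathlib

/-!
By Plancherel the half-wave evolution is bounded on `L²`. Its kernel satisfies
`|K(x)| ≲ (|T|/L)^(-(d-1)/2)`, which is the `L¹ → L^∞` estimate, and the remaining exponents follow
by interpolation.

For the kernel, view `e^{iT|ξ|} χ(|ξ| - L)` as a Gaussian `e^{-b|ξ|²}`, with `b ≈ L⁻²`, times a
function of `u = |ξ|²`, and expand the latter as a Fourier integral in `u` with dual variable `s`.
Then `K` is a superposition of complex Gaussians, whose Fourier transforms have size
`|b - 2πis|^(-d/2)`. For `|s| ≲ |T|/L` the phase `T√u - 2πsu` is nonstationary on the annulus, and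
the contribution decays rapidly in `T`. For `|s| ≳ |T|/L` the Gaussians are of size
`(|T|/L)^(-d/2)`, while the `L¹` norm of the density is `≲ (|T|/L)^(1/2)`: up to a modulation, the
profile is `O(1)` with derivative `O(|T|/L²)` on an interval of length `≈ L`, so this is Bernstein's
inequality.

The interpolation splits `g`, for each level `s` of the output, at a height depending on `s`, and
applies the `L²` bound to the large part and the kernel bound to the small one.
-/

open MeasureTheory Complex
open scoped RealInnerProductSpace ENNReal FourierTransform

/-- The normalized cutoff `ζ_κ⁰(s) = ζ_κ(s)/Σ_{ν∈ℤ} ζ_κ(s − ν)`. -/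
noncomputable def zetaNorm (ζ : ℝ → ℝ) (s : ℝ) : ℝ := ζ s / ∑' ν : ℤ, ζ (s - ν)

/-- The annulus symbol `ζ_{κ,λ}(ξ) = ζ_κ⁰(|ξ| − λ)`. -/
noncomputable def zetaAnn (d : ℕ) (ζ : ℝ → ℝ) (lam : ℕ) (ξ : EuclideanSpace ℝ (Fin d)) : ℝ :=
  zetaNorm ζ (‖ξ‖ - lam)

open Filter Topology
open scoped ContDiff NNReal

lemma hasCompactSupport_of_tsupport_subset_Ioo {F : Type*} [Zero F] {χ : ℝ → F} {x y : ℝ}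
    (h : tsupport χ ⊆ Set.Ioo x y) : HasCompactSupport χ :=
  isCompact_Icc.of_isClosed_subset (isClosed_tsupport χ) (h.trans Set.Ioo_subset_Icc_self)

section NonstationaryPhase

/-- The oscillatory integral with phase `α(v - γv²/2)`, over `[-r, r]`. Its amplitude carries a
power of `(1 - γv)⁻¹`, where `α(1 - γv)` is the derivative of the phase: these powers are what
repeated integration by parts produces. -/
noncomputable def quadraticPhaseIntegral (r : ℝ) (χ : ℝ → ℂ) (k : ℕ) (α γ : ℂ) : ℂ :=
  ∫ v in (-r)..r, cexp (α * (v - γ / 2 * v ^ 2)) * (χ v * (1 - γ * v)⁻¹ ^ k)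

variable {r : ℝ} {χ : ℝ → ℂ} {α γ : ℂ}

lemma half_le_norm_one_sub_mul {v : ℝ} (hγ : 2 * ‖γ‖ * r ≤ 1) (hv : |v| ≤ r) :
    1 / 2 ≤ ‖1 - γ * v‖ := by
  have hγv : ‖γ * v‖ ≤ 1 / 2 := by
    rw [norm_mul, norm_real, Real.norm_eq_abs]
    nlinarith [mul_le_mul_of_nonneg_left hv (norm_nonneg γ)]
  have := norm_sub_norm_le (1 : ℂ) (γ * v)
  rw [norm_one] at this
  linarith

lemma hasDerivAt_cexp_mul_inv_pow {χ' : ℂ} {v : ℝ} (hχ : HasDerivAt χ χ' v)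
    (hv : (1 - γ * v : ℂ) ≠ 0) (k : ℕ) :
    HasDerivAt (fun v : ℝ => cexp (α * (v - γ / 2 * v ^ 2)) * (χ v * (1 - γ * v)⁻¹ ^ (k + 1)))
      (α * (cexp (α * (v - γ / 2 * v ^ 2)) * (χ v * (1 - γ * v)⁻¹ ^ k)) +
        (cexp (α * (v - γ / 2 * v ^ 2)) * (χ' * (1 - γ * v)⁻¹ ^ (k + 1)) +
          (k + 1) * γ * (cexp (α * (v - γ / 2 * v ^ 2)) * (χ v * (1 - γ * v)⁻¹ ^ (k + 2))))) v := by
  have hid : HasDerivAt (fun v : ℝ => (v : ℂ)) 1 v := ofRealCLM.hasDerivAt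
  have hexp : HasDerivAt (fun v : ℝ => cexp (α * (v - γ / 2 * v ^ 2)))
      (cexp (α * (v - γ / 2 * v ^ 2)) * (α * (1 - γ * v))) v := by
    convert! ((hid.sub ((hid.pow 2).const_mul (γ / 2))).const_mul α).cexp using 1
    simp only [Pi.pow_apply, Pi.sub_apply, Nat.cast_ofNat, Nat.add_one_sub_one, pow_one, mul_one]
    ring
  have hinv : HasDerivAt (fun v : ℝ => (1 - γ * v : ℂ)⁻¹ ^ (k + 1))
      ((k + 1) * γ * (1 - γ * v : ℂ)⁻¹ ^ (k + 2)) v := by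
    convert! (((hid.const_mul γ).const_sub 1).fun_inv hv).pow (k + 1) using 1
    simp only [inv_pow, Nat.cast_add, Nat.cast_one, add_tsub_cancel_right, mul_one, neg_neg]
    field_simp
    ring
  convert! hexp.mul (hχ.mul hinv) using 1
  rw [show (1 - γ * v : ℂ)⁻¹ ^ k = (1 - γ * v) * (1 - γ * v : ℂ)⁻¹ ^ (k + 1) by
    rw [pow_succ]; field_simp]
  simp only [Pi.mul_apply]
  ring

lemma intervalIntegrable_cexp_mul_inv_pow (hγ : 2 * ‖γ‖ * r ≤ 1) (hr : 0 ≤ r) (hχ : Continuous χ)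
    (k : ℕ) :
    IntervalIntegrable (fun v : ℝ => cexp (α * (v - γ / 2 * v ^ 2)) * (χ v * (1 - γ * v)⁻¹ ^ k))
      volume (-r) r := by
  refine ContinuousOn.intervalIntegrable ?_
  refine ContinuousOn.mul (by fun_prop) (hχ.continuousOn.mul (ContinuousOn.pow ?_ k))
  refine ContinuousOn.inv₀ (by fun_prop) fun v hv => norm_pos_iff.1 ?_
  rw [Set.uIcc_of_le (by linarith)] at hv
  linarith [half_le_norm_one_sub_mul hγ (abs_le.2 hv)]

lemma mul_quadraticPhaseIntegral (hγ : 2 * ‖γ‖ * r ≤ 1) (hr : 0 ≤ r) (hχ : ContDiff ℝ 1 χ)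
    (hl : χ (-r) = 0) (hu : χ r = 0) (k : ℕ) :
    α * quadraticPhaseIntegral r χ k α γ =
      -(quadraticPhaseIntegral r (deriv χ) (k + 1) α γ +
        (k + 1) * γ * quadraticPhaseIntegral r χ (k + 2) α γ) := by
  have hne : ∀ v ∈ Set.uIcc (-r) r, (1 - γ * v : ℂ) ≠ 0 := fun v hv => norm_pos_iff.1 <| by
    rw [Set.uIcc_of_le (by linarith)] at hv
    linarith [half_le_norm_one_sub_mul hγ (abs_le.2 hv)]
  have hint0 := (intervalIntegrable_cexp_mul_inv_pow hγ hr hχ.continuous k (α := α)).const_mul α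
  have hint1 := intervalIntegrable_cexp_mul_inv_pow hγ hr hχ.continuous_deriv_one (k + 1) (α := α)
  have hint2 := (intervalIntegrable_cexp_mul_inv_pow hγ hr hχ.continuous (k + 2)
    (α := α)).const_mul ((k + 1) * γ)
  have hderiv := fun v hv => hasDerivAt_cexp_mul_inv_pow (α := α)
    ((hχ.differentiable one_ne_zero) v).hasDerivAt (hne v hv) k
  have hftc := intervalIntegral.integral_eq_sub_of_hasDerivAt hderiv (hint0.add (hint1.add hint2))
  rw [intervalIntegral.integral_add hint0 (hint1.add hint2),
    intervalIntegral.integral_add hint1 hint2, intervalIntegral.integral_const_mul,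
    intervalIntegral.integral_const_mul, hl, hu] at hftc
  simp only [zero_mul, mul_zero, sub_zero] at hftc
  exact eq_neg_of_add_eq_zero_left hftc

lemma norm_quadraticPhaseIntegral_le {A S : ℝ} (hγ : 2 * ‖γ‖ * r ≤ 1) (hr : 0 ≤ r) (hS₀ : 0 ≤ S)
    (hA : ∀ v : ℝ, |v| ≤ r → ‖cexp (α * (v - γ / 2 * v ^ 2))‖ ≤ A) (hS : ∀ v, ‖χ v‖ ≤ S) (k : ℕ) :
    ‖quadraticPhaseIntegral r χ k α γ‖ ≤ A * (S * 2 ^ k) * (2 * r) := by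
  have hbound := intervalIntegral.norm_integral_le_of_norm_le_const (a := -r) (b := r)
    (f := fun v : ℝ => cexp (α * (v - γ / 2 * v ^ 2)) * (χ v * (1 - γ * v)⁻¹ ^ k))
    (C := A * (S * 2 ^ k)) fun v hv => by
      rw [Set.uIoc_of_le (by linarith)] at hv
      have hvr : |v| ≤ r := abs_le.2 ⟨hv.1.le, hv.2⟩
      have hinv : ‖1 - γ * v‖⁻¹ ≤ 2 := by
        have := half_le_norm_one_sub_mul hγ hvr
        rw [inv_le_comm₀ (by linarith) (by norm_num)]
        linarith
      rw [norm_mul, norm_mul, norm_pow, norm_inv]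
      gcongr
      · exact (norm_nonneg _).trans (hA v hvr)
      · exact hA v hvr
      · exact hS v
  rwa [show |r - -r| = 2 * r by rw [abs_of_nonneg (by linarith)]; ring] at hbound

/-- The principle of nonstationary phase: the condition on `γ` keeps the derivative `α(1 - γv)` of
the phase comparable to `α`. -/
theorem exists_pow_mul_norm_quadraticPhaseIntegral_le (A : ℝ) (hr : 0 < r) (N : ℕ)
    (hχ : ContDiff ℝ ∞ χ) (hsupp : tsupport χ ⊆ Set.Ioo (-r) r) (k : ℕ) :
    ∃ C, 0 ≤ C ∧ ∀ α γ : ℂ, 2 * ‖γ‖ * r ≤ 1 →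
      (∀ v : ℝ, |v| ≤ r → ‖cexp (α * (v - γ / 2 * v ^ 2))‖ ≤ A) →
      ‖α‖ ^ N * ‖quadraticPhaseIntegral r χ k α γ‖ ≤ C := by
  induction N generalizing χ k with
  | zero =>
    obtain ⟨S, hS⟩ :=
      (hasCompactSupport_of_tsupport_subset_Ioo hsupp).exists_bound_of_continuous hχ.continuous
    have hS₀ : 0 ≤ S := (norm_nonneg _).trans (hS 0)
    refine ⟨|A| * (S * 2 ^ k) * (2 * r), by positivity, fun α γ hγ hA => ?_⟩
    rw [pow_zero, one_mul]
    exact norm_quadraticPhaseIntegral_le hγ hr.le hS₀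
      (fun v hv => (hA v hv).trans (le_abs_self A)) hS k
  | succ N ih =>
    obtain ⟨C₁, hC₁, h₁⟩ := ih (contDiff_infty_iff_deriv.1 hχ).2
      ((tsupport_deriv_subset).trans hsupp) (k + 1)
    obtain ⟨C₂, hC₂, h₂⟩ := ih hχ hsupp (k + 2)
    refine ⟨C₁ + (k + 1) * (1 / (2 * r)) * C₂, by positivity, fun α γ hγ hA => ?_⟩
    have hzero : ∀ v, v ∉ Set.Ioo (-r) r → χ v = 0 := fun v hv =>
      image_eq_zero_of_notMem_tsupport fun h => hv (hsupp h)
    have hγr : ‖γ‖ ≤ 1 / (2 * r) := by rw [le_div_iff₀ (by positivity)]; linarith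
    have hk : ‖(k + 1 : ℂ)‖ = k + 1 := by exact_mod_cast Complex.norm_natCast (k + 1)
    calc ‖α‖ ^ (N + 1) * ‖quadraticPhaseIntegral r χ k α γ‖
        = ‖α‖ ^ N * ‖α * quadraticPhaseIntegral r χ k α γ‖ := by rw [norm_mul]; ring
      _ ≤ ‖α‖ ^ N * (‖quadraticPhaseIntegral r (deriv χ) (k + 1) α γ‖ +
            (k + 1) * ‖γ‖ * ‖quadraticPhaseIntegral r χ (k + 2) α γ‖) := by
          rw [mul_quadraticPhaseIntegral hγ hr.le (hχ.of_le (by simp)) (hzero _ (by simp))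
            (hzero _ (by simp)), norm_neg, ← hk, ← norm_mul, ← norm_mul]
          gcongr
          exact norm_add_le _ _
      _ = ‖α‖ ^ N * ‖quadraticPhaseIntegral r (deriv χ) (k + 1) α γ‖ +
            (k + 1) * ‖γ‖ * (‖α‖ ^ N * ‖quadraticPhaseIntegral r χ (k + 2) α γ‖) := by ring
      _ ≤ C₁ + (k + 1) * (1 / (2 * r)) * C₂ := by
          gcongr
          · exact h₁ α γ hγ hA
          · exact h₂ α γ hγ hA

end NonstationaryPhase

section Bernstein

lemma sq_integral_mul_le {X : Type*} [MeasurableSpace X] {μ : Measure X} {f g : X → ℝ}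
    (hf₀ : 0 ≤ f) (hg₀ : 0 ≤ g) (hf : MemLp f 2 μ) (hg : MemLp g 2 μ) :
    (∫ x, f x * g x ∂μ) ^ 2 ≤ (∫ x, f x ^ 2 ∂μ) * ∫ x, g x ^ 2 ∂μ := by
  have hcs := integral_mul_le_Lp_mul_Lq_of_nonneg (μ := μ) Real.HolderConjugate.two_two
    (.of_forall hf₀) (.of_forall hg₀) (by simpa using hf) (by simpa using hg)
  simp only [Real.rpow_two, ← Real.sqrt_eq_rpow] at hcs
  calc (∫ x, f x * g x ∂μ) ^ 2 ≤ (√(∫ x, f x ^ 2 ∂μ) * √(∫ x, g x ^ 2 ∂μ)) ^ 2 := by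
        gcongr
        exact integral_nonneg fun x => mul_nonneg (hf₀ x) (hg₀ x)
    _ = (∫ x, f x ^ 2 ∂μ) * ∫ x, g x ^ 2 ∂μ := by
        rw [mul_pow, Real.sq_sqrt (integral_nonneg fun _ => sq_nonneg _),
          Real.sq_sqrt (integral_nonneg fun _ => sq_nonneg _)]

lemma integral_inv_one_add_mul_sq {a : ℝ} (ha : 0 < a) :
    ∫ s : ℝ, (1 + (a * s) ^ 2)⁻¹ = Real.pi / a := by
  rw [Measure.integral_comp_mul_left (fun x : ℝ => (1 + x ^ 2)⁻¹) a, integral_univ_inv_one_add_sq,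
    abs_of_pos (inv_pos.2 ha), smul_eq_mul, div_eq_inv_mul]

variable {F : Type*} [NormedAddCommGroup F] [InnerProductSpace ℂ F]

lemma norm_fourier_derivCLM (f : SchwartzMap ℝ F) (s : ℝ) :
    ‖𝓕 (SchwartzMap.derivCLM ℂ F f) s‖ = 2 * Real.pi * |s| * ‖𝓕 f s‖ := by
  rw [SchwartzMap.fourier_coe, SchwartzMap.fourier_coe,
    show (SchwartzMap.derivCLM ℂ F f : ℝ → F) = deriv f from
      funext fun x => SchwartzMap.derivCLM_apply ℂ f x,
    Real.fourier_deriv f.integrable f.differentiable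
      ((SchwartzMap.derivCLM ℂ F f).integrable (μ := volume)), norm_smul]
  simp [abs_of_pos Real.pi_pos]

/-- Cauchy–Schwarz with the weight `1 + (2πas)²`, followed by Plancherel. -/
theorem sq_integral_norm_fourier_le [CompleteSpace F] (f : SchwartzMap ℝ F) {a : ℝ} (ha : 0 < a) :
    (∫ s, ‖𝓕 f s‖) ^ 2 ≤ ((∫ u, ‖f u‖ ^ 2) + a ^ 2 * ∫ u, ‖deriv f u‖ ^ 2) / (2 * a) := by
  set P : ℝ → ℝ := fun s => 1 + (2 * Real.pi * a * s) ^ 2 with hP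
  have hP₀ : ∀ s, 0 < P s := fun s => by positivity
  have hPcont : Continuous fun s => √(P s) := by fun_prop
  have hsq : ∀ g : SchwartzMap ℝ F, Integrable fun s => ‖g s‖ ^ 2 := fun g =>
    (g.memLp 2 volume).integrable_norm_pow two_ne_zero
  have hinv : ∀ s, ((√(P s))⁻¹) ^ 2 = (P s)⁻¹ := fun s => by rw [inv_pow, Real.sq_sqrt (hP₀ s).le]
  have hweight : ∀ s, (√(P s) * ‖𝓕 f s‖) ^ 2 =
      ‖𝓕 f s‖ ^ 2 + a ^ 2 * ‖𝓕 (SchwartzMap.derivCLM ℂ F f) s‖ ^ 2 := fun s => by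
    rw [norm_fourier_derivCLM, mul_pow, Real.sq_sqrt (hP₀ s).le]
    simp only [hP, mul_pow, sq_abs]
    ring
  have hmem₁ : MemLp (fun s => (√(P s))⁻¹) 2 := by
    refine (memLp_two_iff_integrable_sq (by fun_prop)).2 ?_
    simp only [hinv]
    exact integrable_inv_one_add_sq.comp_mul_left' (by positivity)
  have hmem₂ : MemLp (fun s => √(P s) * ‖𝓕 f s‖) 2 := by
    have hcont : Continuous fun s => √(P s) * ‖𝓕 f s‖ := hPcont.mul (𝓕 f).continuous.norm
    refine (memLp_two_iff_integrable_sq hcont.aestronglyMeasurable).2 ?_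
    simp only [hweight]
    exact (hsq _).add ((hsq _).const_mul _)
  calc (∫ s, ‖𝓕 f s‖) ^ 2 = (∫ s, (√(P s))⁻¹ * (√(P s) * ‖𝓕 f s‖)) ^ 2 := by
        simp only [inv_mul_cancel_left₀ (Real.sqrt_pos.2 (hP₀ _)).ne']
    _ ≤ (∫ s, ((√(P s))⁻¹) ^ 2) * ∫ s, (√(P s) * ‖𝓕 f s‖) ^ 2 :=
        sq_integral_mul_le (fun s => by positivity) (fun s => by positivity) hmem₁ hmem₂
    _ = ((∫ u, ‖f u‖ ^ 2) + a ^ 2 * ∫ u, ‖deriv f u‖ ^ 2) / (2 * a) := by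
        simp only [hinv, hweight]
        rw [integral_inv_one_add_mul_sq (by positivity), integral_add (hsq _)
          ((hsq _).const_mul _), integral_const_mul, SchwartzMap.integral_norm_sq_fourier,
          SchwartzMap.integral_norm_sq_fourier]
        simp only [SchwartzMap.derivCLM_apply]
        field_simp

end Bernstein

section RadialProfile

/-- The function `u ↦ e^{bu} e^{i(T√u - σu)} χ(√u - L)`. For `σ = 0` and `u = ‖ξ‖²` this is
`e^{b‖ξ‖²}` times the half-wave multiplier `e^{iT‖ξ‖} χ(‖ξ‖ - L)`; a nonzero `σ` removes a linear
phase. The junk value `√u = 0` for `u < 0` is harmless: `χ(-L) = 0` in all applications. -/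
noncomputable def radialProfile (χ : ℝ → ℂ) (L T b σ u : ℝ) : ℂ :=
  cexp ((b * u : ℝ) + (T * √u - σ * u : ℝ) * I) * χ (√u - L)

variable {χ : ℝ → ℂ} {r R c L T b σ : ℝ}

lemma support_radialProfile_subset (hsupp : tsupport χ ⊆ Set.Ioo (-r) r) (hrL : r ≤ L) :
    Function.support (radialProfile χ L T b σ) ⊆ Set.Ioo ((L - r) ^ 2) ((L + r) ^ 2) := by
  intro u hu
  obtain ⟨hl, hr⟩ := hsupp (subset_tsupport χ (right_ne_zero_of_mul hu))
  have hu₀ : 0 < u := Real.sqrt_pos.1 (by linarith)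
  rw [← Real.sq_sqrt hu₀.le]
  constructor <;> gcongr <;> linarith

lemma tsupport_radialProfile_subset (hsupp : tsupport χ ⊆ Set.Ioo (-r) r) (hrL : r ≤ L) :
    tsupport (radialProfile χ L T b σ) ⊆ Set.Icc ((L - r) ^ 2) ((L + r) ^ 2) :=
  closure_minimal ((support_radialProfile_subset hsupp hrL).trans Set.Ioo_subset_Icc_self)
    isClosed_Icc

lemma hasCompactSupport_radialProfile (hsupp : tsupport χ ⊆ Set.Ioo (-r) r) (hrL : r ≤ L) :
    HasCompactSupport (radialProfile χ L T b σ) :=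
  isCompact_Icc.of_isClosed_subset (isClosed_tsupport _) (tsupport_radialProfile_subset hsupp hrL)

lemma contDiff_radialProfile (hχ : ContDiff ℝ ∞ χ) (hsupp : tsupport χ ⊆ Set.Ioo (-r) r)
    (hrL : r < L) : ContDiff ℝ ∞ (radialProfile χ L T b σ) := by
  refine contDiff_iff_contDiffAt.2 fun u => ?_
  rcases le_or_gt u 0 with hu | hu
  · refine contDiffAt_const.congr_of_eventuallyEq (notMem_tsupport_iff_eventuallyEq.1 fun h => ?_)
    nlinarith [(tsupport_radialProfile_subset hsupp hrL.le h).1]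
  · have hsqrt : ContDiffAt ℝ ∞ (fun u : ℝ => √u) u := Real.contDiffAt_sqrt hu.ne'
    have hphase : ContDiffAt ℝ ∞ (fun u : ℝ => T * √u - σ * u) u := by fun_prop
    exact (((ofRealCLM.contDiff.contDiffAt.comp u (contDiffAt_const.mul contDiffAt_id)).add
      ((ofRealCLM.contDiff.contDiffAt.comp u hphase).mul contDiffAt_const)).cexp).mul
      (hχ.contDiffAt.comp u (hsqrt.sub contDiffAt_const))

/-- The radial profile as a Schwartz function. -/
noncomputable def radialProfileSchwartz (hχ : ContDiff ℝ ∞ χ) (hsupp : tsupport χ ⊆ Set.Ioo (-r) r)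
    (hrL : r < L) (T b σ : ℝ) : SchwartzMap ℝ ℂ :=
  (hasCompactSupport_radialProfile (T := T) (b := b) (σ := σ) hsupp hrL.le).toSchwartzMap
    (contDiff_radialProfile hχ hsupp hrL)

lemma coe_radialProfileSchwartz (hχ : ContDiff ℝ ∞ χ) (hsupp : tsupport χ ⊆ Set.Ioo (-r) r)
    (hrL : r < L) (T b σ : ℝ) :
    ⇑(radialProfileSchwartz hχ hsupp hrL T b σ) = radialProfile χ L T b σ :=
  rfl

lemma norm_radialProfile_eq (u : ℝ) :
    ‖radialProfile χ L T b σ u‖ = Real.exp (b * u) * ‖χ (√u - L)‖ := by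
  rw [radialProfile, norm_mul, norm_exp, add_re, ofReal_re, re_ofReal_mul, I_re, mul_zero, add_zero]

lemma exp_mul_le_of_mem_Icc (hr : 0 ≤ r) (hrL : r ≤ L) (hb : 0 ≤ b) (hbL : b * L ^ 2 ≤ 1) {u : ℝ}
    (hu : u ∈ Set.Icc ((L - r) ^ 2) ((L + r) ^ 2)) : Real.exp (b * u) ≤ Real.exp 4 := by
  have hu₄ : u ≤ 4 * L ^ 2 := hu.2.trans (by nlinarith)
  exact Real.exp_le_exp.2 (by nlinarith [mul_le_mul_of_nonneg_left hu₄ hb])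

lemma norm_radialProfile_le {S : ℝ} (hsupp : tsupport χ ⊆ Set.Ioo (-r) r) (hS : ∀ v, ‖χ v‖ ≤ S)
    (hr : 0 ≤ r) (hrL : r ≤ L) (hb : 0 ≤ b) (hbL : b * L ^ 2 ≤ 1) (u : ℝ) :
    ‖radialProfile χ L T b σ u‖ ≤ Real.exp 4 * S := by
  by_cases hu : u ∈ tsupport (radialProfile χ L T b σ)
  · rw [norm_radialProfile_eq]
    gcongr
    · exact Real.exp_le_exp.1
        (exp_mul_le_of_mem_Icc hr hrL hb hbL (tsupport_radialProfile_subset hsupp hrL hu))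
    · exact hS _
  · rw [image_eq_zero_of_notMem_tsupport hu, norm_zero]
    exact mul_nonneg (Real.exp_nonneg 4) ((norm_nonneg _).trans (hS 0))

lemma hasDerivAt_radialProfile (hχ : Differentiable ℝ χ) {u : ℝ} (hu : 0 < u) :
    HasDerivAt (radialProfile χ L T b σ)
      (cexp ((b * u : ℝ) + (T * √u - σ * u : ℝ) * I) *
        ((b + (T * (1 / (2 * √u)) - σ : ℝ) * I) * χ (√u - L) +
          (1 / (2 * √u) : ℝ) * deriv χ (√u - L))) u := by
  have hsqrt := Real.hasDerivAt_sqrt hu.ne'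
  have hmul (a : ℝ) : HasDerivAt (fun u : ℝ => a * u) a u := by
    simpa using (hasDerivAt_id u).const_mul a
  have hexp := ((hmul b).ofReal_comp.add
    (((hsqrt.const_mul T).sub (hmul σ)).ofReal_comp.mul_const I)).cexp
  have hcomp : HasDerivAt (fun u => χ (√u - L)) ((1 / (2 * √u) : ℝ) • deriv χ (√u - L)) u :=
    (hχ _).hasDerivAt.scomp u (hsqrt.sub_const L)
  convert! hexp.mul hcomp using 1
  simp only [real_smul, Pi.add_apply, Pi.sub_apply]
  ring

/-- With `σ = T/(2L)` the derivative of the phase `T√u - σu` vanishes at `u = L²`. -/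
lemma abs_phase_deriv_le {s : ℝ} (hL : 0 < L) (hs : 0 < s) (hsL : |s - L| ≤ r) :
    |T * (1 / (2 * s)) - T / (2 * L)| ≤ |T| * r / (2 * L * s) := by
  rw [show T * (1 / (2 * s)) - T / (2 * L) = T * (L - s) / (2 * L * s) by field_simp,
    abs_div, abs_mul, abs_sub_comm L s, abs_of_pos (show 0 < 2 * L * s by positivity)]
  gcongr

lemma norm_deriv_radialProfile_le {S S' : ℝ} (hχ : Differentiable ℝ χ) (hS : ∀ v, ‖χ v‖ ≤ S)
    (hS' : ∀ v, ‖deriv χ v‖ ≤ S') (hr : 0 ≤ r) (hrL : r < L) (hb : 0 ≤ b) (hbL : b * L ^ 2 ≤ 1)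
    {u : ℝ} (hu : u ∈ Set.Icc ((L - r) ^ 2) ((L + r) ^ 2)) :
    ‖deriv (radialProfile χ L T b (T / (2 * L))) u‖ ≤
      Real.exp 4 * ((b + |T| * r / (2 * L * (L - r))) * S + 1 / (2 * (L - r)) * S') := by
  have hLr : 0 < L - r := sub_pos.2 hrL
  have hL : 0 < L := hr.trans_lt hrL
  have hsl : L - r ≤ √u := Real.le_sqrt_of_sq_le hu.1
  have hsu : √u ≤ L + r := (Real.sqrt_le_left (by linarith)).2 hu.2
  have hs : 0 < √u := hLr.trans_le hsl
  have hsL : |√u - L| ≤ r := abs_le.2 ⟨by linarith, by linarith⟩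
  have hphase : |T * (1 / (2 * √u)) - T / (2 * L)| ≤ |T| * r / (2 * L * (L - r)) :=
    (abs_phase_deriv_le hL hs hsL).trans (by gcongr)
  have hexp : ‖cexp ((b * u : ℝ) + (T * √u - T / (2 * L) * u : ℝ) * I)‖ ≤ Real.exp 4 := by
    rw [norm_exp, add_re, ofReal_re, re_ofReal_mul, I_re, mul_zero, add_zero]
    exact exp_mul_le_of_mem_Icc hr hrL.le hb hbL hu
  have : 0 ≤ S := (norm_nonneg _).trans (hS 0)
  rw [(hasDerivAt_radialProfile hχ (Real.sqrt_pos.1 hs)).deriv, norm_mul]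
  gcongr
  refine (norm_add_le _ _).trans (add_le_add ?_ ?_) <;> rw [norm_mul]
  · gcongr
    · refine (norm_add_le _ _).trans (add_le_add ?_ ?_)
      · rw [norm_real, Real.norm_of_nonneg hb]
      · rwa [norm_mul, norm_I, mul_one, norm_real]
    · exact hS _
  · rw [norm_real, Real.norm_of_nonneg (by positivity)]
    gcongr
    exact hS' _

lemma exists_norm_deriv_radialProfile_le (hχ : ContDiff ℝ ∞ χ)
    (hsupp : tsupport χ ⊆ Set.Ioo (-r) r) (hr : 0 ≤ r) (hrR : r < R) (hc : 0 < c) :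
    ∃ D, 0 ≤ D ∧ ∀ L T b : ℝ, R ≤ L → c * L ≤ |T| → 0 ≤ b → b * L ^ 2 ≤ 1 → ∀ u,
      ‖deriv (radialProfile χ L T b (T / (2 * L))) u‖ ≤ D * (|T| / L ^ 2) := by
  have hcs := hasCompactSupport_of_tsupport_subset_Ioo hsupp
  obtain ⟨S, hS⟩ := hcs.exists_bound_of_continuous hχ.continuous
  obtain ⟨S', hS'⟩ := hcs.deriv.exists_bound_of_continuous (hχ.continuous_deriv (by simp))
  have hS₀ : 0 ≤ S := (norm_nonneg _).trans (hS 0)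
  have hS'₀ : 0 ≤ S' := (norm_nonneg _).trans (hS' 0)
  have hR : 0 < R := hr.trans_lt hrR
  set θ : ℝ := 1 - r / R
  have hθ : 0 < θ := sub_pos.2 ((div_lt_one hR).2 hrR)
  set D : ℝ := Real.exp 4 * ((1 / (c * R) + r / (2 * θ)) * S + 1 / (2 * θ * c) * S') with hD
  refine ⟨D, by positivity, fun L T b hRL hcT hb hbL u => ?_⟩
  have hL : 0 < L := hR.trans_le hRL
  by_cases hu : u ∈ tsupport (radialProfile χ L T b (T / (2 * L)))
  swap
  · rw [image_eq_zero_of_notMem_tsupport fun h => hu (tsupport_deriv_subset h), norm_zero]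
    positivity
  have hθL : θ * L ≤ L - r := by
    have : r ≤ r / R * L := by rw [div_mul_eq_mul_div, le_div_iff₀ hR]; gcongr
    linarith [sub_mul 1 (r / R) L]
  have hbT : b ≤ 1 / (c * R) * (|T| / L ^ 2) := by
    rw [← mul_div_assoc, le_div_iff₀ (by positivity)]
    refine hbL.trans ?_
    rw [one_div_mul_eq_div, one_le_div (by positivity)]
    exact (by gcongr : c * R ≤ c * L).trans hcT
  have hT : 1 / (2 * (θ * L)) ≤ 1 / (2 * θ * c) * (|T| / L ^ 2) := by
    rw [div_mul_div_comm, one_mul, div_le_div_iff₀ (by positivity) (by positivity)]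
    calc 1 * (2 * θ * c * L ^ 2) = c * L * (2 * (θ * L)) := by ring
      _ ≤ |T| * (2 * (θ * L)) := by gcongr
  calc _ ≤ Real.exp 4 * ((b + |T| * r / (2 * L * (L - r))) * S + 1 / (2 * (L - r)) * S') :=
        norm_deriv_radialProfile_le (hχ.differentiable (by simp)) hS hS' hr (hrR.trans_le hRL) hb
          hbL (tsupport_radialProfile_subset hsupp (hrR.trans_le hRL).le hu)
    _ ≤ Real.exp 4 * ((1 / (c * R) * (|T| / L ^ 2) + |T| * r / (2 * L * (θ * L))) * S +
          1 / (2 * θ * c) * (|T| / L ^ 2) * S') := by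
        gcongr
        exact (by gcongr : 1 / (2 * (L - r)) ≤ 1 / (2 * (θ * L))).trans hT
    _ = D * (|T| / L ^ 2) := by rw [hD]; field_simp

lemma fourier_radialProfile_shift (s : ℝ) :
    𝓕 (radialProfile χ L T b σ) s = 𝓕 (radialProfile χ L T b 0) (s + σ / (2 * Real.pi)) := by
  rw [Real.fourier_eq', Real.fourier_eq']
  congr 1 with u
  simp only [radialProfile, smul_eq_mul, ← mul_assoc, ← Complex.exp_add]
  congr 2
  simp only [RCLike.inner_apply, conj_trivial, zero_mul, sub_zero]
  push_cast
  field_simp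
  ring

lemma integral_norm_sq_le_of_support_subset {F : Type*} [NormedAddCommGroup F] {g : ℝ → F}
    {M x y : ℝ} (hxy : x ≤ y) (hg : Function.support g ⊆ Set.Icc x y) (hM : ∀ u, ‖g u‖ ≤ M) :
    ∫ u, ‖g u‖ ^ 2 ≤ M ^ 2 * (y - x) := by
  rw [← setIntegral_eq_integral_of_forall_compl_eq_zero (s := Set.Icc x y) fun u hu => by
    rw [Function.notMem_support.1 fun h => hu (hg h), norm_zero, zero_pow two_ne_zero]]
  rw [← Real.volume_real_Icc_of_le hxy]
  refine (Real.le_norm_self _).trans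
    (norm_setIntegral_le_of_norm_le_const measure_Icc_lt_top fun u _ => ?_)
  rw [norm_pow, norm_norm]
  gcongr
  exact hM u

/-- Bernstein's inequality `sq_integral_norm_fourier_le` at `a = L²/|T|`. A linear phase translates
the Fourier transform, so it may be removed beforehand. -/
theorem exists_integral_norm_fourier_radialProfile_le (hχ : ContDiff ℝ ∞ χ)
    (hsupp : tsupport χ ⊆ Set.Ioo (-r) r) (hr : 0 ≤ r) (hrR : r < R) (hc : 0 < c) :
    ∃ C, 0 ≤ C ∧ ∀ L T b : ℝ, R ≤ L → c * L ≤ |T| → 0 ≤ b → b * L ^ 2 ≤ 1 →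
      ∫ s, ‖𝓕 (radialProfile χ L T b 0) s‖ ≤ C * √(|T| / L) := by
  obtain ⟨S, hS⟩ :=
    (hasCompactSupport_of_tsupport_subset_Ioo hsupp).exists_bound_of_continuous hχ.continuous
  obtain ⟨D, -, hD⟩ := exists_norm_deriv_radialProfile_le hχ hsupp hr hrR hc
  refine ⟨√(2 * r * ((Real.exp 4 * S) ^ 2 + D ^ 2)), Real.sqrt_nonneg _,
    fun L T b hRL hcT hb hbL => ?_⟩
  have hrL : r < L := hrR.trans_le hRL
  have hL : 0 < L := hr.trans_lt hrL
  have hT : 0 < |T| := (mul_pos hc hL).trans_le hcT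
  set σ := T / (2 * L)
  set m := radialProfileSchwartz hχ hsupp hrL T b σ
  have hlen : (L - r) ^ 2 ≤ (L + r) ^ 2 := by nlinarith
  have hm : ∫ u, ‖m u‖ ^ 2 ≤ (Real.exp 4 * S) ^ 2 * ((L + r) ^ 2 - (L - r) ^ 2) :=
    integral_norm_sq_le_of_support_subset hlen
      (subset_closure.trans (tsupport_radialProfile_subset hsupp hrL.le))
      (norm_radialProfile_le hsupp hS hr hrL.le hb hbL)
  have hm' : ∫ u, ‖deriv m u‖ ^ 2 ≤ (D * (|T| / L ^ 2)) ^ 2 * ((L + r) ^ 2 - (L - r) ^ 2) :=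
    integral_norm_sq_le_of_support_subset hlen (subset_closure.trans <|
      tsupport_deriv_subset.trans (tsupport_radialProfile_subset hsupp hrL.le))
      (hD L T b hRL hcT hb hbL)
  have hshift : ∫ s, ‖𝓕 (radialProfile χ L T b 0) s‖ = ∫ s, ‖𝓕 m s‖ := by
    rw [← integral_add_right_eq_self _ (σ / (2 * Real.pi))]
    simp only [← fourier_radialProfile_shift, SchwartzMap.fourier_coe, m,
      coe_radialProfileSchwartz]
  rw [hshift, ← Real.sqrt_mul (by positivity)]
  refine Real.le_sqrt_of_sq_le ((sq_integral_norm_fourier_le m (a := L ^ 2 / |T|)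
    (by positivity)).trans ?_)
  calc _ ≤ ((Real.exp 4 * S) ^ 2 * ((L + r) ^ 2 - (L - r) ^ 2) + (L ^ 2 / |T|) ^ 2 *
        ((D * (|T| / L ^ 2)) ^ 2 * ((L + r) ^ 2 - (L - r) ^ 2))) / (2 * (L ^ 2 / |T|)) := by gcongr
    _ = 2 * r * ((Real.exp 4 * S) ^ 2 + D ^ 2) * (|T| / L) := by field_simp; ring

end RadialProfile

section LowFrequency

variable {χ : ℝ → ℂ} {r L T b s : ℝ}

lemma integral_eq_intervalIntegral_sq {F : Type*} [NormedAddCommGroup F] [NormedSpace ℝ F]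
    {g : ℝ → F} (hg : Continuous g)
    (hsupp : Function.support g ⊆ Set.Ioo ((L - r) ^ 2) ((L + r) ^ 2)) :
    ∫ u, g u = ∫ v in (-r)..r, (2 * (L + v)) • g ((L + v) ^ 2) := by
  have hderiv (v : ℝ) : HasDerivAt (fun v => (L + v) ^ 2) (2 * (L + v)) v := by
    simpa using! ((hasDerivAt_id v).const_add L).pow 2
  have hsubst := intervalIntegral.integral_deriv_smul_comp (a := -r) (b := r)
    (fun v _ => hderiv v) (by fun_prop) hg
  rw [← intervalIntegral.integral_eq_integral_of_support_subset
    (hsupp.trans Set.Ioo_subset_Ioc_self), sub_eq_add_neg, ← hsubst]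
  rfl

/-- In the variable `v = √u - L`, and with `w = 2πis - b`, the exponent of the Fourier integrand is
`(iT - 2wL)v - wv²` up to a constant. -/
lemma fourierChar_mul_radialProfile_sq {w α γ : ℂ} (hw : w = 2 * Real.pi * s * I - b)
    (hα : α = I * T - 2 * w * L) (hγ : α * γ = 2 * w) {v : ℝ} (hv : 0 ≤ L + v) :
    cexp ((-2 * Real.pi * ⟪(L + v) ^ 2, s⟫ : ℝ) * I) * radialProfile χ L T b 0 ((L + v) ^ 2) =
      cexp (I * T * L - w * L ^ 2) * (cexp (α * (v - γ / 2 * v ^ 2)) * χ v) := by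
  rw [radialProfile, Real.sqrt_sq hv, add_sub_cancel_left, ← mul_assoc, ← mul_assoc,
    ← Complex.exp_add, ← Complex.exp_add,
    show α * (v - γ / 2 * v ^ 2) = α * v - α * γ / 2 * v ^ 2 by ring, hγ, hα, hw]
  congr 2
  simp only [RCLike.inner_apply, conj_trivial]
  push_cast
  ring

lemma fourier_radialProfile_eq (hχ : ContDiff ℝ ∞ χ) (hsupp : tsupport χ ⊆ Set.Ioo (-r) r)
    (hr : 0 ≤ r) (hrL : r < L) {w α γ : ℂ} (hw : w = 2 * Real.pi * s * I - b)
    (hα : α = I * T - 2 * w * L) (hγ : α * γ = 2 * w) :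
    𝓕 (radialProfile χ L T b 0) s = cexp (I * T * L - w * L ^ 2) *
      (2 * L * quadraticPhaseIntegral r χ 0 α γ +
        2 * quadraticPhaseIntegral r (fun v => v * χ v) 0 α γ) := by
  have hm := (contDiff_radialProfile (T := T) (b := b) (σ := 0) hχ hsupp hrL).continuous
  have hχc : Continuous χ := hχ.continuous
  rw [Real.fourier_eq', integral_eq_intervalIntegral_sq (r := r) (L := L) (by fun_prop) fun u hu =>
    support_radialProfile_subset (T := T) (b := b) (σ := 0) hsupp hrL.le
      (right_ne_zero_of_smul hu)]
  have hcongr : ∀ v ∈ Set.uIcc (-r) r, (2 * (L + v)) •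
      (cexp ((-2 * Real.pi * ⟪(L + v) ^ 2, s⟫ : ℝ) * I) • radialProfile χ L T b 0 ((L + v) ^ 2)) =
      cexp (I * T * L - w * L ^ 2) * (2 * L * (cexp (α * (v - γ / 2 * v ^ 2)) * χ v) +
        2 * (v * (cexp (α * (v - γ / 2 * v ^ 2)) * χ v))) := fun v hv => by
    rw [Set.uIcc_of_le (by linarith)] at hv
    rw [smul_eq_mul, fourierChar_mul_radialProfile_sq hw hα hγ (by linarith [hv.1]), real_smul]
    push_cast
    ring
  rw [intervalIntegral.integral_congr hcongr, intervalIntegral.integral_const_mul,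
    intervalIntegral.integral_add (Continuous.intervalIntegrable (by fun_prop) _ _)
      (Continuous.intervalIntegrable (by fun_prop) _ _), intervalIntegral.integral_const_mul,
    intervalIntegral.integral_const_mul]
  simp only [quadraticPhaseIntegral, pow_zero, mul_one, mul_left_comm]

lemma norm_fourier_radialProfile_le (hχ : ContDiff ℝ ∞ χ) (hsupp : tsupport χ ⊆ Set.Ioo (-r) r)
    (hr : 0 ≤ r) (hrL : r < L) (hbL : b * L ^ 2 ≤ 1) {w α γ : ℂ}
    (hw : w = 2 * Real.pi * s * I - b) (hα : α = I * T - 2 * w * L) (hγ : α * γ = 2 * w) :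
    ‖𝓕 (radialProfile χ L T b 0) s‖ ≤ Real.exp 1 * (2 * L * ‖quadraticPhaseIntegral r χ 0 α γ‖ +
      2 * ‖quadraticPhaseIntegral r (fun v => v * χ v) 0 α γ‖) := by
  have hL : 0 < L := hr.trans_lt hrL
  have hre : (I * T * L - w * L ^ 2).re = b * L ^ 2 := by
    rw [hw, ← ofReal_pow, sub_re, re_mul_ofReal, re_mul_ofReal]
    simp [-ofReal_pow]
  rw [fourier_radialProfile_eq hχ hsupp hr hrL hw hα hγ, norm_mul, norm_exp, hre]
  gcongr
  refine (norm_add_le _ _).trans (le_of_eq ?_)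
  simp [abs_of_pos hL]

lemma half_abs_le_norm_phase {w : ℂ} (hw : w = 2 * Real.pi * s * I - b) (hL : 0 ≤ L)
    (hsT : 32 * Real.pi * |s| * L ≤ |T|) : |T| / 2 ≤ ‖I * T - 2 * w * L‖ := by
  have him : (I * T - 2 * w * L).im = T - 4 * Real.pi * s * L := by
    rw [hw]
    simp only [sub_im, mul_im, mul_re, sub_re, I_re, I_im, ofReal_re, ofReal_im, re_ofNat, im_ofNat]
    ring
  have habs : |4 * Real.pi * s * L| = 4 * Real.pi * |s| * L := by
    rw [abs_mul, abs_mul, abs_of_nonneg hL, abs_of_pos (by positivity : 0 < 4 * Real.pi)]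
  have hdiff := abs_sub_abs_le_abs_sub T (4 * Real.pi * s * L)
  refine le_trans ?_ (abs_im_le_norm _)
  rw [him]
  linarith [abs_nonneg T]

lemma four_mul_norm_mul_le {w : ℂ} (hw : w = 2 * Real.pi * s * I - b) (hr : 0 ≤ r)
    (hrL : r ≤ L) (hb : 0 ≤ b) (hbT : 16 * (b * L) ≤ |T|) (hsT : 32 * Real.pi * |s| * L ≤ |T|) :
    4 * ‖w‖ * r ≤ |T| / 2 := by
  have hwn : ‖w‖ ≤ 2 * Real.pi * |s| + b := by
    refine (norm_le_abs_re_add_abs_im w).trans (le_of_eq ?_)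
    rw [hw]
    simp [abs_mul, abs_of_pos Real.pi_pos, abs_of_nonneg hb, add_comm]
  calc 4 * ‖w‖ * r ≤ 4 * (2 * Real.pi * |s| + b) * L := by gcongr
    _ ≤ |T| / 2 := by linarith

lemma norm_cexp_phase_le {w : ℂ} (hw : w = 2 * Real.pi * s * I - b) (hr : 0 ≤ r) (hrL : r ≤ L)
    (hb : 0 ≤ b) (hbL : b * L ^ 2 ≤ 1) {v : ℝ} (hv : |v| ≤ r) :
    ‖cexp ((I * T - 2 * w * L) * v - w * v ^ 2)‖ ≤ Real.exp 3 := by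
  have hre : ((I * T - 2 * w * L) * v - w * v ^ 2).re = b * (2 * (L * v) + v ^ 2) := by
    rw [hw, ← ofReal_pow, sub_re, re_mul_ofReal, re_mul_ofReal]
    simp only [sub_re, mul_re, mul_im, sub_im, I_re, I_im, ofReal_re, ofReal_im, re_ofNat, im_ofNat]
    ring
  have hLv : L * v ≤ L ^ 2 := by nlinarith [le_abs_self v]
  have hv₂ : v ^ 2 ≤ L ^ 2 := sq_le_sq.2 ((hv.trans hrL).trans (le_abs_self L))
  rw [norm_exp, hre]
  refine Real.exp_le_exp.2 ?_
  calc b * (2 * (L * v) + v ^ 2) ≤ b * (2 * L ^ 2 + L ^ 2) := by gcongr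
    _ ≤ 3 := by linarith

/-- At frequencies `|s| ≲ |T|/L` the phase has no stationary point in the support of the profile,
whence rapid decay in `T`. -/
theorem exists_pow_mul_norm_fourier_radialProfile_le (hχ : ContDiff ℝ ∞ χ)
    (hsupp : tsupport χ ⊆ Set.Ioo (-r) r) (hr : 0 < r) (N : ℕ) :
    ∃ C, 0 ≤ C ∧ ∀ L T b s : ℝ, r < L → T ≠ 0 → 0 ≤ b → b * L ^ 2 ≤ 1 →
      16 * (b * L) ≤ |T| → 32 * Real.pi * |s| * L ≤ |T| →
      |T| ^ N * ‖𝓕 (radialProfile χ L T b 0) s‖ ≤ C * L := by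
  obtain ⟨C₁, hC₁, h₁⟩ :=
    exists_pow_mul_norm_quadraticPhaseIntegral_le (Real.exp 3) hr N hχ hsupp 0
  obtain ⟨C₂, hC₂, h₂⟩ := exists_pow_mul_norm_quadraticPhaseIntegral_le (Real.exp 3) hr N
    (ofRealCLM.contDiff.mul hχ) ((tsupport_mul_subset_right).trans hsupp) 0
  refine ⟨2 ^ N * Real.exp 1 * (2 * C₁ + 2 * C₂ / r), by positivity,
    fun L T b s hrL hT hb hbL hbT hsT => ?_⟩
  have hL : 0 < L := hr.trans hrL
  obtain ⟨w, hw⟩ : ∃ w : ℂ, w = 2 * Real.pi * s * I - b := ⟨_, rfl⟩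
  obtain ⟨α, hα⟩ : ∃ α : ℂ, α = I * T - 2 * w * L := ⟨_, rfl⟩
  have hTα : |T| / 2 ≤ ‖α‖ := hα ▸ half_abs_le_norm_phase hw hL.le hsT
  have hα₀ : α ≠ 0 := norm_pos_iff.1 (lt_of_lt_of_le (by positivity) hTα)
  have hαγ : α * (2 * w / α) = 2 * w := mul_div_cancel₀ _ hα₀
  have hγ : 2 * ‖2 * w / α‖ * r ≤ 1 := by
    have := four_mul_norm_mul_le hw hr.le hrL.le hb hbT hsT
    rw [norm_div, norm_mul, norm_ofNat, mul_div_assoc', div_mul_eq_mul_div,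
      div_le_one (norm_pos_iff.2 hα₀)]
    linarith
  have hA : ∀ v : ℝ, |v| ≤ r → ‖cexp (α * (v - 2 * w / α / 2 * v ^ 2))‖ ≤ Real.exp 3 := by
    intro v hv
    rw [show α * (v - 2 * w / α / 2 * v ^ 2) = α * v - α * (2 * w / α) / 2 * v ^ 2 by ring, hαγ,
      mul_div_cancel_left₀ _ two_ne_zero, hα]
    exact norm_cexp_phase_le hw hr.le hrL.le hb hbL hv
  calc |T| ^ N * ‖𝓕 (radialProfile χ L T b 0) s‖
      ≤ (2 * ‖α‖) ^ N * (Real.exp 1 * (2 * L * ‖quadraticPhaseIntegral r χ 0 α (2 * w / α)‖ +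
          2 * ‖quadraticPhaseIntegral r (fun v => v * χ v) 0 α (2 * w / α)‖)) := by
        gcongr
        · linarith
        · exact norm_fourier_radialProfile_le hχ hsupp hr.le hrL hbL hw hα hαγ
    _ = 2 ^ N * Real.exp 1 *
          (2 * L * (‖α‖ ^ N * ‖quadraticPhaseIntegral r χ 0 α (2 * w / α)‖) +
          2 * (‖α‖ ^ N * ‖quadraticPhaseIntegral r (fun v => v * χ v) 0 α (2 * w / α)‖)) := by ring
    _ ≤ 2 ^ N * Real.exp 1 * (2 * L * C₁ + 2 * C₂ * (L / r)) := by
        have hLr := le_mul_of_one_le_right hC₂ ((one_le_div hr).2 hrL.le)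
        rw [mul_assoc 2 C₂]
        refine mul_le_mul_of_nonneg_left (add_le_add ?_ ?_) (by positivity)
        · exact mul_le_mul_of_nonneg_left (h₁ α _ hγ hA) (by positivity)
        · exact mul_le_mul_of_nonneg_left ((h₂ α _ hγ hA).trans hLr) zero_le_two
    _ = 2 ^ N * Real.exp 1 * (2 * C₁ + 2 * C₂ / r) * L := by ring

end LowFrequency

section Kernel

variable {E : Type*} [NormedAddCommGroup E]

/-- The half-wave multiplier `e^{iT|ξ|} χ(|ξ| - L)`. -/
noncomputable def halfWaveSymbol (E : Type*) [Norm E] (χ : ℝ → ℂ) (L T : ℝ) (ξ : E) : ℂ :=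
  cexp (I * ((T * ‖ξ‖ : ℝ) : ℂ)) * χ (‖ξ‖ - L)

lemma halfWaveSymbol_eq_gaussian_mul {χ : ℝ → ℂ} {L T : ℝ} (b : ℝ) (ξ : E) :
    halfWaveSymbol E χ L T ξ = cexp (-b * ‖ξ‖ ^ 2) * radialProfile χ L T b 0 (‖ξ‖ ^ 2) := by
  rw [halfWaveSymbol, radialProfile, Real.sqrt_sq (norm_nonneg ξ), ← mul_assoc, ← Complex.exp_add]
  push_cast
  ring_nf

lemma norm_halfWaveSymbol (χ : ℝ → ℂ) (L T : ℝ) (ξ : E) :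
    ‖halfWaveSymbol E χ L T ξ‖ = ‖χ (‖ξ‖ - L)‖ := by
  rw [halfWaveSymbol, norm_mul, mul_comm I, norm_exp_ofReal_mul_I, one_mul]

variable [InnerProductSpace ℝ E] [FiniteDimensional ℝ E] [MeasurableSpace E] [BorelSpace E]

lemma norm_integral_cexp_neg_mul_sq_norm_add_le {w : ℂ} (hw : 0 < w.re) (x : E) :
    ‖∫ ξ : E, cexp (-w * ‖ξ‖ ^ 2 + 2 * Real.pi * I * ⟪x, ξ⟫)‖ ≤
      (Real.pi / ‖w‖) ^ ((Module.finrank ℝ E : ℝ) / 2) := by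
  have hw₀ : w ≠ 0 := fun h => by simp [h] at hw
  have hexponent : (2 * (Real.pi : ℂ) * I) ^ 2 * ‖x‖ ^ 2 / (4 * w) =
      ((-(Real.pi ^ 2 * ‖x‖ ^ 2) : ℝ) : ℂ) * w⁻¹ := by
    field_simp
    rw [I_sq]
    push_cast
    ring
  rw [GaussianFourier.integral_cexp_neg_mul_sq_norm_add hw, norm_mul, ← ofReal_natCast,
    show (Module.finrank ℝ E : ℝ) / (2 : ℂ) = ((Module.finrank ℝ E / 2 : ℝ) : ℂ) by push_cast; rfl,
    norm_cpow_real, norm_div, norm_real,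
    Real.norm_of_nonneg Real.pi_pos.le, norm_exp]
  refine mul_le_of_le_one_right (by positivity) (Real.exp_le_one_iff.2 ?_)
  rw [hexponent, re_ofReal_mul, inv_re]
  exact mul_nonpos_of_nonpos_of_nonneg (neg_nonpos.2 (by positivity))
    (div_nonneg hw.le (normSq_nonneg w))

lemma integrable_gaussian_mul {g : ℝ → ℂ} (hg : Integrable g) {b : ℝ} (hb : 0 < b) (x : E) :
    Integrable (fun z : E × ℝ => cexp (-(b - 2 * Real.pi * z.2 * I) * ‖z.1‖ ^ 2 +
      2 * Real.pi * I * ⟪x, z.1⟫) * g z.2) (volume.prod volume) := by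
  have hprod := (GaussianFourier.integrable_cexp_neg_mul_sq_norm_add (b := b) (by simpa using hb)
    (2 * Real.pi * I) x).mul_prod hg
  have hphase : ∀ z : E × ℝ, ‖cexp ((2 * Real.pi * z.2 * ‖z.1‖ ^ 2 : ℝ) * I)‖ ≤ 1 :=
    fun z => (norm_exp_ofReal_mul_I _).le
  refine (hprod.bdd_mul (Continuous.aestronglyMeasurable (by fun_prop))
    (Eventually.of_forall hphase)).congr (Eventually.of_forall fun z => ?_)
  simp only
  rw [← mul_assoc, ← Complex.exp_add]
  push_cast
  ring_nf

/-- Writing the radial factor as a Fourier integral exhibits the kernel as a superposition of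
complex Gaussians. -/
lemma norm_fourierInv_gaussian_mul_comp_sq_le {g : ℝ → ℂ} (hg : Integrable g) {b : ℝ} (hb : 0 < b)
    (x : E) :
    ‖𝓕⁻ (fun ξ : E => cexp (-b * ‖ξ‖ ^ 2) * 𝓕⁻ g (‖ξ‖ ^ 2)) x‖ ≤
      ∫ s, ‖g s‖ * (Real.pi / ‖(b - 2 * Real.pi * s * I : ℂ)‖) ^
        ((Module.finrank ℝ E : ℝ) / 2) := by
  have hsymbol (ξ : E) : cexp ((2 * Real.pi * ⟪ξ, x⟫ : ℝ) * I) •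
      (cexp (-b * ‖ξ‖ ^ 2) * 𝓕⁻ g (‖ξ‖ ^ 2)) =
      ∫ s : ℝ, cexp (-(b - 2 * Real.pi * s * I) * ‖ξ‖ ^ 2 + 2 * Real.pi * I * ⟪x, ξ⟫) * g s := by
    rw [Real.fourierInv_eq', smul_eq_mul, ← mul_assoc, ← Complex.exp_add, ← integral_const_mul]
    refine integral_congr_ae (Eventually.of_forall fun s => ?_)
    simp only [smul_eq_mul, RCLike.inner_apply, conj_trivial]
    rw [← mul_assoc, ← Complex.exp_add, real_inner_comm]
    push_cast
    ring_nf
  have hre (s : ℝ) : 0 < (b - 2 * Real.pi * s * I : ℂ).re := by simpa using hb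
  rw [Real.fourierInv_eq', integral_congr_ae (Eventually.of_forall hsymbol),
    integral_integral_swap (integrable_gaussian_mul hg hb x)]
  refine (norm_integral_le_integral_norm _).trans (integral_mono_of_nonneg
    (Eventually.of_forall fun s => norm_nonneg _) ?_ (Eventually.of_forall fun s => ?_))
  · refine hg.norm.mul_bdd (c := (Real.pi / b) ^ ((Module.finrank ℝ E : ℝ) / 2))
      (Measurable.aestronglyMeasurable (by fun_prop)) (Eventually.of_forall fun s => ?_)
    rw [Real.norm_of_nonneg (by positivity)]
    gcongr
    simpa using re_le_norm (b - 2 * Real.pi * s * I : ℂ)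
  · simp only
    rw [integral_mul_const, norm_mul, mul_comm]
    gcongr
    exact norm_integral_cexp_neg_mul_sq_norm_add_le (hre s) x

lemma integral_norm_mul_rpow_le {g : ℝ → ℂ} (hg : Integrable g) {a b P ν : ℝ} (ha : 0 < a)
    (hb : 0 < b) (hν : 0 ≤ ν) (hP : ∀ s, |s| ≤ a → ‖g s‖ ≤ P) :
    ∫ s, ‖g s‖ * (Real.pi / ‖(b - 2 * Real.pi * s * I : ℂ)‖) ^ ν ≤
      2 * a * (P * (Real.pi / b) ^ ν) + (2 * a)⁻¹ ^ ν * ∫ s, ‖g s‖ := by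
  have hindicator : Integrable
      (Set.indicator (Set.Icc (-a) a) fun _ : ℝ => P * (Real.pi / b) ^ ν) :=
    (integrable_indicator_iff measurableSet_Icc).2 (integrableOn_const (by simp))
  have hP₀ : 0 ≤ P := (norm_nonneg _).trans (hP 0 (by simpa using ha.le))
  have hbound : ∀ s, ‖g s‖ * (Real.pi / ‖(b - 2 * Real.pi * s * I : ℂ)‖) ^ ν ≤
      Set.indicator (Set.Icc (-a) a) (fun _ => P * (Real.pi / b) ^ ν) s +
        (2 * a)⁻¹ ^ ν * ‖g s‖ := fun s => by
    by_cases hs : |s| ≤ a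
    · rw [Set.indicator_of_mem (show s ∈ Set.Icc (-a) a from abs_le.1 hs)]
      refine le_add_of_le_of_nonneg ?_ (by positivity)
      gcongr
      · exact hP s hs
      · simpa using re_le_norm (b - 2 * Real.pi * s * I : ℂ)
    · rw [Set.indicator_of_notMem (show s ∉ Set.Icc (-a) a from fun h => hs (abs_le.2 h)), zero_add,
        mul_comm]
      rw [not_le] at hs
      have him : 2 * Real.pi * |s| ≤ ‖(b - 2 * Real.pi * s * I : ℂ)‖ := by
        simpa [abs_mul, abs_of_pos Real.pi_pos] using
          abs_im_le_norm (b - 2 * Real.pi * s * I : ℂ)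
      gcongr
      rw [div_le_iff₀ (lt_of_lt_of_le (by have := ha.trans hs; positivity) him),
        inv_mul_eq_div, le_div_iff₀ (by positivity)]
      nlinarith [mul_le_mul_of_nonneg_left hs.le Real.pi_pos.le]
  have hvol : volume.real (Set.Icc (-a) a) = 2 * a := by
    rw [Measure.real, Real.volume_Icc, ENNReal.toReal_ofReal (by linarith)]
    ring
  refine (integral_mono_of_nonneg (Eventually.of_forall fun s => by positivity)
    (hindicator.add (hg.norm.const_mul _)) (Eventually.of_forall hbound)).trans (le_of_eq ?_)
  simp only [Pi.add_apply]
  rw [integral_add hindicator (hg.norm.const_mul _), integral_const_mul,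
    integral_indicator measurableSet_Icc, setIntegral_const, hvol, smul_eq_mul]

variable {χ : ℝ → ℂ} {r R c L T b : ℝ}

lemma integrable_fourier_radialProfile (hχ : ContDiff ℝ ∞ χ) (hsupp : tsupport χ ⊆ Set.Ioo (-r) r)
    (hrL : r < L) : Integrable (𝓕 (radialProfile χ L T b 0)) := by
  rw [← coe_radialProfileSchwartz hχ hsupp hrL, ← SchwartzMap.fourier_coe]
  exact SchwartzMap.integrable _

lemma fourierInv_fourier_radialProfile (hχ : ContDiff ℝ ∞ χ)
    (hsupp : tsupport χ ⊆ Set.Ioo (-r) r) (hrL : r < L) :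
    𝓕⁻ (𝓕 (radialProfile χ L T b 0)) = radialProfile χ L T b 0 := by
  rw [← coe_radialProfileSchwartz hχ hsupp hrL, ← SchwartzMap.fourier_coe,
    ← SchwartzMap.fourierInv_coe, FourierTransform.fourierInv_fourier_eq]

lemma norm_fourierInv_halfWaveSymbol_le (hχ : ContDiff ℝ ∞ χ)
    (hsupp : tsupport χ ⊆ Set.Ioo (-r) r) (hrL : r < L) {a P : ℝ} (ha : 0 < a) (hb : 0 < b)
    (hP : ∀ s, |s| ≤ a → ‖𝓕 (radialProfile χ L T b 0) s‖ ≤ P) (x : E) :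
    ‖𝓕⁻ (halfWaveSymbol E χ L T) x‖ ≤
      2 * a * (P * (Real.pi / b) ^ ((Module.finrank ℝ E : ℝ) / 2)) +
        (2 * a)⁻¹ ^ ((Module.finrank ℝ E : ℝ) / 2) *
          ∫ s, ‖𝓕 (radialProfile χ L T b 0) s‖ := by
  have hint := integrable_fourier_radialProfile (T := T) (b := b) hχ hsupp hrL
  have hkernel := norm_fourierInv_gaussian_mul_comp_sq_le hint hb x
  rw [fourierInv_fourier_radialProfile hχ hsupp hrL] at hkernel
  simp only [← halfWaveSymbol_eq_gaussian_mul] at hkernel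
  exact hkernel.trans (integral_norm_mul_rpow_le hint ha hb (by positivity) hP)

lemma low_add_high_frequency_bound_le {n : ℕ} {c τ L β δ C₁ C₂ : ℝ} (hc : 0 < c) (hτ : c ≤ τ)
    (hL : 0 < L) (hβ : 0 < β) (hδ : 0 < δ) (hC₂ : 0 ≤ C₂) :
    2 * (δ * τ) * (C₂ * L / (τ * L) ^ (n + 1) * (Real.pi / (β / L ^ 2)) ^ ((n : ℝ) / 2)) +
        (2 * (δ * τ))⁻¹ ^ ((n : ℝ) / 2) * (C₁ * √τ) ≤
      (2 * δ * C₂ * (Real.pi / β) ^ ((n : ℝ) / 2) * c ^ (-(((n : ℝ) + 1) / 2)) +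
        (2 * δ)⁻¹ ^ ((n : ℝ) / 2) * C₁) * τ ^ (-(((n : ℝ) - 1) / 2)) := by
  have hτ₀ : 0 < τ := hc.trans_le hτ
  have hgauss : (Real.pi / (β / L ^ 2)) ^ ((n : ℝ) / 2) =
      (Real.pi / β) ^ ((n : ℝ) / 2) * L ^ n := by
    rw [← div_mul, Real.mul_rpow (by positivity) (by positivity), ← Real.rpow_natCast_mul hL.le,
      ← Real.rpow_natCast L n]
    push_cast
    ring_nf
  have hpow : (τ ^ n)⁻¹ = τ ^ (-(((n : ℝ) + 1) / 2)) * τ ^ (-(((n : ℝ) - 1) / 2)) := by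
    rw [← Real.rpow_add hτ₀, ← Real.rpow_natCast, ← Real.rpow_neg hτ₀.le]
    ring_nf
  have hlow : τ ^ (-(((n : ℝ) + 1) / 2)) ≤ c ^ (-(((n : ℝ) + 1) / 2)) :=
    Real.rpow_le_rpow_of_nonpos hc hτ (neg_nonpos.2 (by positivity))
  have hhigh : (2 * (δ * τ))⁻¹ ^ ((n : ℝ) / 2) * √τ =
      (2 * δ)⁻¹ ^ ((n : ℝ) / 2) * τ ^ (-(((n : ℝ) - 1) / 2)) := by
    rw [← mul_assoc, mul_inv, Real.mul_rpow (by positivity) (by positivity), Real.inv_rpow hτ₀.le,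
      ← Real.rpow_neg hτ₀.le, Real.sqrt_eq_rpow, mul_assoc, ← Real.rpow_add hτ₀]
    ring_nf
  calc _ = 2 * δ * C₂ * (Real.pi / β) ^ ((n : ℝ) / 2) * (τ ^ n)⁻¹ +
          (2 * (δ * τ))⁻¹ ^ ((n : ℝ) / 2) * √τ * C₁ := by
        rw [hgauss, mul_pow]
        field_simp
        ring
    _ ≤ _ := by
        rw [hpow, hhigh, add_mul, ← mul_assoc, mul_right_comm _ _ C₁]
        gcongr

theorem exists_norm_fourierInv_halfWaveSymbol_le (hχ : ContDiff ℝ ∞ χ)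
    (hsupp : tsupport χ ⊆ Set.Ioo (-r) r) (hr : 0 < r) (hrR : r < R) (hc : 0 < c) :
    ∃ C, 0 ≤ C ∧ ∀ L T : ℝ, R ≤ L → c * L ≤ |T| → ∀ x : E,
      ‖𝓕⁻ (halfWaveSymbol E χ L T) x‖ ≤
        C * (|T| / L) ^ (-(((Module.finrank ℝ E : ℝ) - 1) / 2)) := by
  obtain ⟨C₁, hC₁, h₁⟩ := exists_integral_norm_fourier_radialProfile_le hχ hsupp hr.le hrR hc
  obtain ⟨C₂, hC₂, h₂⟩ :=
    exists_pow_mul_norm_fourier_radialProfile_le hχ hsupp hr (Module.finrank ℝ E + 1)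
  have hR : 0 < R := hr.trans hrR
  obtain ⟨β, hβ, hβ₁, hβc⟩ : ∃ β : ℝ, 0 < β ∧ β ≤ 1 ∧ 16 * β ≤ c * R ^ 2 :=
    ⟨min 1 (c * R ^ 2 / 16), by positivity, min_le_left _ _, by
      linarith [min_le_right 1 (c * R ^ 2 / 16)]⟩
  refine ⟨_, ?_, fun L T hL hT x => le_trans ?_ (low_add_high_frequency_bound_le
    (δ := 1 / (32 * Real.pi)) (C₁ := C₁) (C₂ := C₂) hc
    ((le_div_iff₀ (hR.trans_le hL)).2 hT) (hR.trans_le hL) hβ (by positivity) hC₂)⟩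
  · positivity
  have hL₀ : 0 < L := hR.trans_le hL
  have hT₀ : 0 < |T| := lt_of_lt_of_le (by positivity) hT
  have hbL : β / L ^ 2 * L ^ 2 ≤ 1 := by rwa [div_mul_cancel₀ _ (by positivity)]
  have hbT : 16 * (β / L ^ 2 * L) ≤ |T| := by
    refine le_trans ?_ hT
    rw [show 16 * (β / L ^ 2 * L) = 16 * β / L by field_simp, div_le_iff₀ hL₀, mul_assoc, ← sq]
    exact hβc.trans (by gcongr)
  have hTL : |T| / L * L = |T| := div_mul_cancel₀ _ hL₀.ne'
  rw [hTL]
  refine (norm_fourierInv_halfWaveSymbol_le hχ hsupp (hrR.trans_le hL)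
    (a := 1 / (32 * Real.pi) * (|T| / L)) (b := β / L ^ 2)
    (P := C₂ * L / |T| ^ (Module.finrank ℝ E + 1)) (by positivity) (by positivity)
    (fun s hs => ?_) x).trans ?_
  · rw [le_div_iff₀' (by positivity)]
    refine h₂ L T _ s (hrR.trans_le hL) (abs_pos.1 hT₀) (by positivity) hbL hbT ?_
    calc 32 * Real.pi * |s| * L ≤ 32 * Real.pi * (1 / (32 * Real.pi) * (|T| / L)) * L := by gcongr
      _ = |T| := by field_simp
  · gcongr
    exact h₁ L T _ hL hT (by positivity) hbL

end Kernel

section Interpolation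

lemma lintegral_rpow_le_of_forall_measure_le {X Y : Type*} [MeasurableSpace X] [MeasurableSpace Y]
    {μ : Measure X} {ν : Measure Y} {h : X → ℝ} {f : Y → ℝ} {C : ℝ≥0∞} {a : ℝ} (hC : C ≠ ⊤)
    (ha : 0 < a) (hh : ∀ x, 0 ≤ h x) (hf : ∀ y, 0 ≤ f y) (hhm : AEMeasurable h μ)
    (hfm : AEMeasurable f ν) (hle : ∀ s, 0 < s → ν {y | s < f y} ≤ C * μ {x | s ≤ h x}) :
    ∫⁻ y, ENNReal.ofReal (f y ^ a) ∂ν ≤ C * ∫⁻ x, ENNReal.ofReal (h x ^ a) ∂μ := by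
  rw [lintegral_rpow_eq_lintegral_meas_lt_mul ν (.of_forall hf) hfm ha,
    lintegral_rpow_eq_lintegral_meas_le_mul μ (.of_forall hh) hhm ha, mul_left_comm,
    ← lintegral_const_mul' _ _ hC]
  refine mul_le_mul_right (setLIntegral_mono' measurableSet_Ioi fun s hs => ?_) _
  rw [← mul_assoc]
  exact mul_le_mul_left (hle s hs) _

variable {X Y G G' : Type*} [MeasurableSpace X] [MeasurableSpace Y] {μ : Measure X} {ν : Measure Y}
  [NormedAddCommGroup G] [NormedAddCommGroup G'] {T : (X → G) → Y → G'} {g : X → G}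
  {A B m s p q : ℝ}

lemma eLpNorm_two_sq (f : X → G) : eLpNorm f 2 μ ^ 2 = ∫⁻ x, ‖f x‖ₑ ^ 2 ∂μ := by
  simpa using eLpNorm_nnreal_pow_eq_lintegral (f := f) (μ := μ) (p := 2) two_ne_zero

lemma setLIntegral_enorm_sq_le_of_truncation
    (hadd : ∀ φ ψ, MemLp φ 2 μ → MemLp ψ 2 μ → ∀ y, ‖T (φ + ψ) y‖ ≤ ‖T φ y‖ + ‖T ψ y‖)
    (h₂ : ∀ φ, MemLp φ 2 μ → eLpNorm (T φ) 2 ν ≤ eLpNorm φ 2 μ)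
    (h₁ : ∀ φ, MemLp φ 2 μ → ∀ y, ‖T φ y‖ₑ ≤ ENNReal.ofReal A * ∫⁻ x, ‖φ x‖ₑ ∂μ)
    (hA : 0 ≤ A) (hg : MemLp g 2 μ) (hTg : StronglyMeasurable (T g)) {S : Set X}
    (hS : MeasurableSet S) (hm : 0 ≤ m) (hgm : ∫⁻ x in Sᶜ, ‖g x‖ₑ ∂μ ≤ ENNReal.ofReal m) :
    ∫⁻ y in {y | A * m < ‖T g y‖ / 2}, ‖T g y‖ₑ ^ 2 ∂ν ≤ 4 * ∫⁻ x in S, ‖g x‖ₑ ^ 2 ∂μ := by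
  have hlow : MemLp (S.indicator g) 2 μ := hg.indicator hS
  have hhigh : MemLp (Sᶜ.indicator g) 2 μ := hg.indicator hS.compl
  have hT_high (y : Y) : ‖T (Sᶜ.indicator g) y‖ ≤ A * m := by
    rw [← ENNReal.ofReal_le_ofReal_iff (by positivity), ofReal_norm, ENNReal.ofReal_mul hA]
    refine (h₁ _ hhigh y).trans ?_
    simp_rw [enorm_indicator_eq_indicator_enorm, lintegral_indicator hS.compl]
    gcongr
  have hT_low (y : Y) (hy : A * m < ‖T g y‖ / 2) : ‖T g y‖ₑ ≤ 2 * ‖T (S.indicator g) y‖ₑ := by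
    have hsplit := hadd _ _ hlow hhigh y
    rw [Set.indicator_self_add_compl] at hsplit
    rw [← ofReal_norm, ← ofReal_norm, ← ENNReal.ofReal_ofNat, ← ENNReal.ofReal_mul zero_le_two]
    exact ENNReal.ofReal_le_ofReal (by linarith [hT_high y])
  calc ∫⁻ y in {y | A * m < ‖T g y‖ / 2}, ‖T g y‖ₑ ^ 2 ∂ν
      ≤ ∫⁻ y in {y | A * m < ‖T g y‖ / 2}, (2 * ‖T (S.indicator g) y‖ₑ) ^ 2 ∂ν :=
        setLIntegral_mono' (measurableSet_lt measurable_const (hTg.norm.measurable.div_const 2))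
          fun y hy => by gcongr; exact hT_low y hy
    _ ≤ ∫⁻ y, (2 * ‖T (S.indicator g) y‖ₑ) ^ 2 ∂ν := setLIntegral_le_lintegral _ _
    _ = 4 * eLpNorm (T (S.indicator g)) 2 ν ^ 2 := by
        simp_rw [mul_pow]
        rw [lintegral_const_mul' _ _ (by simp), eLpNorm_two_sq]
        norm_num
    _ ≤ 4 * eLpNorm (S.indicator g) 2 μ ^ 2 := by gcongr; exact h₂ _ hlow
    _ = 4 * ∫⁻ x in S, ‖g x‖ₑ ^ 2 ∂μ := by
        rw [eLpNorm_indicator_eq_eLpNorm_restrict hS, eLpNorm_two_sq]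

/-- The truncation at level `s` keeps the points with `s ≤ A * B * ‖g‖ ^ (1 - q)` because elsewhere
`‖g‖ ≤ (s / (A * B)) * ‖g‖ ^ q`, which has integral `s / A` and so contributes at most `s` to
`T g`. -/
lemma lintegral_enorm_setOf_rpow_lt_le (hA : 0 < A) (hB : 0 < B) (hs : 0 < s)
    (hgB : ∫⁻ x, ‖g x‖ₑ ^ q ∂μ = ENNReal.ofReal B) (hg : StronglyMeasurable g) (hq : 0 < q) :
    ∫⁻ x in {x | s ≤ A * B * ‖g x‖ ^ (1 - q)}ᶜ, ‖g x‖ₑ ∂μ ≤ ENNReal.ofReal (s / A) := by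
  have hpt (x : X) (hx : A * B * ‖g x‖ ^ (1 - q) < s) :
      ‖g x‖ₑ ≤ ENNReal.ofReal (s / (A * B)) * ‖g x‖ₑ ^ q := by
    rw [← ofReal_norm, ENNReal.ofReal_rpow_of_nonneg (norm_nonneg _) hq.le,
      ← ENNReal.ofReal_mul (by positivity)]
    refine ENNReal.ofReal_le_ofReal ?_
    rcases (norm_nonneg (g x)).eq_or_lt with h0 | h0
    · rw [← h0]; positivity
    calc ‖g x‖ = ‖g x‖ ^ (1 - q) * ‖g x‖ ^ q := by rw [← Real.rpow_add h0]; simp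
      _ ≤ s / (A * B) * ‖g x‖ ^ q := by
        gcongr
        rw [le_div_iff₀' (by positivity)]
        exact hx.le
  have hmeas : MeasurableSet {x | s ≤ A * B * ‖g x‖ ^ (1 - q)} :=
    measurableSet_le measurable_const ((hg.norm.measurable.pow_const _).const_mul _)
  calc ∫⁻ x in {x | s ≤ A * B * ‖g x‖ ^ (1 - q)}ᶜ, ‖g x‖ₑ ∂μ
      ≤ ∫⁻ x in {x | s ≤ A * B * ‖g x‖ ^ (1 - q)}ᶜ, ENNReal.ofReal (s / (A * B)) * ‖g x‖ₑ ^ q ∂μ :=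
        setLIntegral_mono' hmeas.compl fun x hx => hpt x (not_le.1 hx)
    _ ≤ ∫⁻ x, ENNReal.ofReal (s / (A * B)) * ‖g x‖ₑ ^ q ∂μ := setLIntegral_le_lintegral _ _
    _ = ENNReal.ofReal (s / A) := by
        rw [lintegral_const_mul' _ _ ENNReal.ofReal_ne_top, hgB,
          ← ENNReal.ofReal_mul (by positivity)]
        congr 1
        field_simp

lemma enorm_sq_mul_ofReal_half_rpow (hp : 2 < p) (z : G) :
    ‖z‖ₑ ^ 2 * ENNReal.ofReal ((‖z‖ / 2) ^ (p - 2)) =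
      (ENNReal.ofReal (2 ^ (p - 2)))⁻¹ * ‖z‖ₑ ^ p := by
  rw [← ofReal_norm, ← ENNReal.ofReal_pow (norm_nonneg z), ← ENNReal.ofReal_inv_of_pos
    (by positivity), ENNReal.ofReal_rpow_of_nonneg (norm_nonneg z) (by linarith),
    ← ENNReal.ofReal_mul (by positivity), ← ENNReal.ofReal_mul (by positivity),
    Real.div_rpow (norm_nonneg z) zero_le_two]
  congr 1
  rw [show ‖z‖ ^ p = ‖z‖ ^ 2 * ‖z‖ ^ (p - 2) by
    rw [← Real.rpow_ofNat, ← Real.rpow_add_of_nonneg (norm_nonneg z) zero_le_two (by linarith)]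
    ring_nf]
  ring

lemma enorm_sq_mul_ofReal_rpow_rpow (hpq : p.HolderConjugate q) {c : ℝ} (hc : 0 ≤ c) (z : G) :
    ‖z‖ₑ ^ 2 * ENNReal.ofReal ((c * ‖z‖ ^ (1 - q)) ^ (p - 2)) =
      ENNReal.ofReal (c ^ (p - 2)) * ‖z‖ₑ ^ q := by
  have hq : 0 < q := hpq.symm.pos
  rw [← ofReal_norm, ← ENNReal.ofReal_pow (norm_nonneg z),
    ENNReal.ofReal_rpow_of_nonneg (norm_nonneg z) hq.le, ← ENNReal.ofReal_mul (by positivity),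
    ← ENNReal.ofReal_mul (by positivity), Real.mul_rpow hc (by positivity), mul_left_comm]
  congr 2
  rcases (norm_nonneg z).eq_or_lt with h0 | h0
  · simp [← h0, Real.zero_rpow hq.ne']
  rw [← Real.rpow_ofNat, ← Real.rpow_mul h0.le, ← Real.rpow_add h0]
  congr 1
  linear_combination -hpq.mul_eq_add

lemma lintegral_enorm_rpow_le_of_truncation [SFinite μ] [SFinite ν]
    (hadd : ∀ φ ψ, MemLp φ 2 μ → MemLp ψ 2 μ → ∀ y, ‖T (φ + ψ) y‖ ≤ ‖T φ y‖ + ‖T ψ y‖)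
    (h₂ : ∀ φ, MemLp φ 2 μ → eLpNorm (T φ) 2 ν ≤ eLpNorm φ 2 μ)
    (h₁ : ∀ φ, MemLp φ 2 μ → ∀ y, ‖T φ y‖ₑ ≤ ENNReal.ofReal A * ∫⁻ x, ‖φ x‖ₑ ∂μ)
    (hA : 0 < A) (hgm : StronglyMeasurable g) (hg : MemLp g 2 μ) (hTg : StronglyMeasurable (T g))
    (hpq : p.HolderConjugate q) (hp : 2 < p) (hB : 0 < B)
    (hgB : ∫⁻ x, ‖g x‖ₑ ^ q ∂μ = ENNReal.ofReal B) :
    ∫⁻ y, ‖T g y‖ₑ ^ p ∂ν ≤ ENNReal.ofReal (2 ^ p * A ^ (p - 2) * B ^ (p - 1)) := by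
  have hq : 0 < q := hpq.symm.pos
  set μ₂ := μ.withDensity fun x => ‖g x‖ₑ ^ 2
  set ν₂ := ν.withDensity fun y => ‖T g y‖ₑ ^ 2
  set h : X → ℝ := fun x => A * B * ‖g x‖ ^ (1 - q)
  have hh : Measurable h := (hgm.norm.measurable.pow_const _).const_mul _
  have hf : Measurable fun y => ‖T g y‖ / 2 := hTg.norm.measurable.div_const 2
  have hlevel (s : ℝ) (hs : 0 < s) : ν₂ {y | s < ‖T g y‖ / 2} ≤ 4 * μ₂ {x | s ≤ h x} := by
    rw [withDensity_apply', withDensity_apply']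
    simpa only [mul_div_cancel₀ s hA.ne'] using
      setLIntegral_enorm_sq_le_of_truncation hadd h₂ h₁ hA.le hg hTg
        (measurableSet_le measurable_const hh) (by positivity)
        (lintegral_enorm_setOf_rpow_lt_le hA hB hs hgB hgm hq)
  have hmain := lintegral_rpow_le_of_forall_measure_le (by simp) (by linarith : 0 < p - 2)
    (fun x => by positivity) (fun y => by positivity) hh.aemeasurable hf.aemeasurable hlevel
  rw [lintegral_withDensity_eq_lintegral_mul _ (hTg.enorm.pow_const 2) (by fun_prop),
    lintegral_withDensity_eq_lintegral_mul _ (hgm.enorm.pow_const 2) (by fun_prop)] at hmain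
  simp only [Pi.mul_apply, h, enorm_sq_mul_ofReal_half_rpow hp,
    enorm_sq_mul_ofReal_rpow_rpow hpq (mul_pos hA hB).le] at hmain
  have h2 : 0 < (2 : ℝ) ^ (p - 2) := by positivity
  rw [lintegral_const_mul' _ _ (by simp [h2]), lintegral_const_mul' _ _ ENNReal.ofReal_ne_top, hgB,
    ENNReal.inv_mul_le_iff (by simp [h2]) ENNReal.ofReal_ne_top] at hmain
  refine hmain.trans_eq ?_
  rw [← ENNReal.ofReal_ofNat, ← ENNReal.ofReal_mul (by positivity),
    ← ENNReal.ofReal_mul (by positivity), ← ENNReal.ofReal_mul (by positivity),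
    Real.mul_rpow hA.le hB.le, show p - 1 = p - 2 + 1 by ring, Real.rpow_add_one hB.ne',
    Real.rpow_sub two_pos, Real.rpow_two]
  congr 1
  ring

lemma truncation_constant_eq (hpq : p.HolderConjugate q) {N : ℝ} (hA : 0 ≤ A) (hN : 0 ≤ N) :
    2 ^ p * A ^ (p - 2) * (N ^ q) ^ (p - 1) = (2 * A ^ (1 - 2 / p) * N) ^ p := by
  have hp : p ≠ 0 := hpq.ne_zero
  rw [Real.mul_rpow (by positivity) hN, Real.mul_rpow zero_le_two (by positivity),
    ← Real.rpow_mul hA, ← Real.rpow_mul hN, mul_comm q, hpq.sub_one_mul_conj]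
  congr 3
  field_simp

lemma eLpNorm_le_of_truncation_of_lt [SFinite μ] [SFinite ν]
    (hadd : ∀ φ ψ, MemLp φ 2 μ → MemLp ψ 2 μ → ∀ y, ‖T (φ + ψ) y‖ ≤ ‖T φ y‖ + ‖T ψ y‖)
    (h₂ : ∀ φ, MemLp φ 2 μ → eLpNorm (T φ) 2 ν ≤ eLpNorm φ 2 μ)
    (h₁ : ∀ φ, MemLp φ 2 μ → ∀ y, ‖T φ y‖ₑ ≤ ENNReal.ofReal A * ∫⁻ x, ‖φ x‖ₑ ∂μ)
    (hA : 0 < A) (hgm : StronglyMeasurable g) (hg : MemLp g 2 μ) (hTg : StronglyMeasurable (T g))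
    {p p' : ℝ≥0∞} (hp : 2 < p) (hp_top : p ≠ ⊤) [p.HolderConjugate p'] :
    eLpNorm (T g) p ν ≤ ENNReal.ofReal (2 * A ^ (1 - 2 / p.toReal)) * eLpNorm g p' μ := by
  have hp2 : 2 < p.toReal := by simpa using (ENNReal.toReal_lt_toReal (by simp) hp_top).2 hp
  have hconj : p.toReal.HolderConjugate p'.toReal :=
    ENNReal.HolderConjugate.toReal (one_lt_two.trans hp2)
  have hp' := ENNReal.toReal_ne_zero.1 hconj.symm.pos.ne'
  rcases eq_or_ne (eLpNorm g p' μ) 0 with h0 | h0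
  · have hg0 := (eLpNorm_eq_zero_iff hgm.aestronglyMeasurable hp'.1).1 h0
    have hTg0 : T g = 0 := by
      ext y
      have hint : ∫⁻ x, ‖g x‖ₑ ∂μ = 0 := by simpa using lintegral_congr_ae (hg0.fun_comp enorm)
      simpa [hint] using h₁ g hg y
    simp [hTg0]
  rcases eq_or_ne (eLpNorm g p' μ) ⊤ with h_top | h_top
  · rw [h_top, ENNReal.mul_top (ENNReal.ofReal_pos.2 (by positivity)).ne']
    exact le_top
  have hN : 0 < (eLpNorm g p' μ).toReal := ENNReal.toReal_pos h0 h_top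
  have hNe : eLpNorm g p' μ = ENNReal.ofReal (eLpNorm g p' μ).toReal :=
    (ENNReal.ofReal_toReal h_top).symm
  set N := (eLpNorm g p' μ).toReal
  have hgN : ∫⁻ x, ‖g x‖ₑ ^ p'.toReal ∂μ = ENNReal.ofReal (N ^ p'.toReal) := by
    rw [← ENNReal.ofReal_rpow_of_pos hN, ← hNe,
      eLpNorm_eq_lintegral_rpow_enorm_toReal hp'.1 hp'.2, ← ENNReal.rpow_mul,
      one_div_mul_cancel hconj.symm.pos.ne', ENNReal.rpow_one]
  have hmain := lintegral_enorm_rpow_le_of_truncation hadd h₂ h₁ hA hgm hg hTg hconj hp2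
    (by positivity) hgN
  rw [hNe, ← ENNReal.ofReal_mul (by positivity),
    eLpNorm_eq_lintegral_rpow_enorm_toReal (two_pos.trans hp).ne' hp_top, one_div,
    ENNReal.rpow_inv_le_iff hconj.pos, ENNReal.ofReal_rpow_of_pos (by positivity)]
  exact hmain.trans_eq (congrArg _ (truncation_constant_eq hconj hA.le hN.le))

theorem eLpNorm_le_of_truncation [SFinite μ] [SFinite ν]
    (hadd : ∀ φ ψ, MemLp φ 2 μ → MemLp ψ 2 μ → ∀ y, ‖T (φ + ψ) y‖ ≤ ‖T φ y‖ + ‖T ψ y‖)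
    (h₂ : ∀ φ, MemLp φ 2 μ → eLpNorm (T φ) 2 ν ≤ eLpNorm φ 2 μ)
    (h₁ : ∀ φ, MemLp φ 2 μ → ∀ y, ‖T φ y‖ₑ ≤ ENNReal.ofReal A * ∫⁻ x, ‖φ x‖ₑ ∂μ)
    (hA : 0 < A) (hgm : StronglyMeasurable g) (hg : MemLp g 2 μ) (hTg : StronglyMeasurable (T g))
    {p p' : ℝ≥0∞} (hp : 2 ≤ p) [p.HolderConjugate p'] :
    eLpNorm (T g) p ν ≤ ENNReal.ofReal (2 * A ^ (1 - 2 / p.toReal)) * eLpNorm g p' μ := by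
  rcases hp.eq_or_lt with rfl | hp2
  · rw [ENNReal.HolderConjugate.unique 2 p' 2]
    refine (h₂ g hg).trans (le_mul_of_one_le_left zero_le ?_)
    simp
  rcases eq_or_ne p ⊤ with rfl | hp_top
  · rw [ENNReal.HolderConjugate.unique ⊤ p' 1, ENNReal.toReal_top, div_zero, sub_zero,
      Real.rpow_one, eLpNorm_exponent_top, eLpNorm_one_eq_lintegral_enorm]
    refine eLpNormEssSup_le_of_ae_enorm_bound (.of_forall fun y => (h₁ g hg y).trans ?_)
    gcongr
    linarith
  · exact eLpNorm_le_of_truncation_of_lt hadd h₂ h₁ hA hgm hg hTg hp2 hp_top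

end Interpolation

section Convolution

open scoped Convolution SchwartzMap

section Group

variable {G : Type*} [AddGroup G] [MeasurableSpace G] {μ : Measure G} {φ K : G → ℂ}

lemma enorm_convolution_le_mul_lintegral {A : ℝ} (hK : ∀ x, ‖K x‖ ≤ A) (x : G) :
    ‖(φ ⋆[ContinuousLinearMap.mul ℂ ℂ, μ] K) x‖ₑ ≤ ENNReal.ofReal A * ∫⁻ t, ‖φ t‖ₑ ∂μ := by
  refine (enorm_integral_le_lintegral_enorm _).trans ?_
  rw [← lintegral_const_mul' _ _ ENNReal.ofReal_ne_top]
  refine lintegral_mono fun t => ?_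
  simp only [ContinuousLinearMap.mul_apply', enorm_mul]
  rw [mul_comm, ← ofReal_norm (K _)]
  gcongr
  exact hK _

variable [MeasurableAdd₂ G] [MeasurableNeg G] [μ.IsAddLeftInvariant] [μ.IsNegInvariant]

lemma convolutionExistsAt_of_memLp_two (hφ : MemLp φ 2 μ) (hK : MemLp K 2 μ) (x : G) :
    ConvolutionExistsAt φ K x (ContinuousLinearMap.mul ℂ ℂ) μ :=
  hφ.integrable_mul (hK.comp_measurePreserving (Measure.measurePreserving_sub_left μ x))

lemma enorm_convolution_le_eLpNorm_two_mul (hφ : MemLp φ 2 μ) (hK : MemLp K 2 μ) (x : G) :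
    ‖(φ ⋆[ContinuousLinearMap.mul ℂ ℂ, μ] K) x‖ₑ ≤ eLpNorm φ 2 μ * eLpNorm K 2 μ := by
  have hsub := Measure.measurePreserving_sub_left μ x
  calc ‖(φ ⋆[ContinuousLinearMap.mul ℂ ℂ, μ] K) x‖ₑ
      ≤ ∫⁻ t, ‖φ t * K (x - t)‖ₑ ∂μ := enorm_integral_le_lintegral_enorm _
    _ = eLpNorm (φ • (K ∘ (x - ·))) 1 μ := eLpNorm_one_eq_lintegral_enorm.symm
    _ ≤ eLpNorm φ 2 μ * eLpNorm (K ∘ (x - ·)) 2 μ :=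
        eLpNorm_smul_le_mul_eLpNorm (hK.comp_measurePreserving hsub).1 hφ.1
    _ = eLpNorm φ 2 μ * eLpNorm K 2 μ := by rw [eLpNorm_comp_measurePreserving hK.1 hsub]

lemma tendsto_convolution_of_tendsto_eLpNorm_two {ι : Type*} {l : Filter ι} {ψ : ι → G → ℂ}
    (hφ : MemLp φ 2 μ) (hψ : ∀ n, MemLp (ψ n) 2 μ) (hK : MemLp K 2 μ)
    (hlim : Tendsto (fun n => eLpNorm (ψ n - φ) 2 μ) l (𝓝 0)) (x : G) :
    Tendsto (fun n => (ψ n ⋆[ContinuousLinearMap.mul ℂ ℂ, μ] K) x) l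
      (𝓝 ((φ ⋆[ContinuousLinearMap.mul ℂ ℂ, μ] K) x)) := by
  rw [tendsto_iff_edist_tendsto_0]
  have hlim' := ENNReal.Tendsto.mul_const (b := eLpNorm K 2 μ) hlim (.inr hK.2.ne)
  rw [zero_mul] at hlim'
  refine tendsto_of_tendsto_of_tendsto_of_le_of_le tendsto_const_nhds hlim'
    (fun n => zero_le) fun n => ?_
  have hsub : (ψ n ⋆[ContinuousLinearMap.mul ℂ ℂ, μ] K) x =
      ((ψ n - φ) ⋆[ContinuousLinearMap.mul ℂ ℂ, μ] K) x +
        (φ ⋆[ContinuousLinearMap.mul ℂ ℂ, μ] K) x := by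
    rw [← (convolutionExistsAt_of_memLp_two ((hψ n).sub hφ) hK x).add_distrib
      (convolutionExistsAt_of_memLp_two hφ hK x), sub_add_cancel]
  simp only
  rw [edist_eq_enorm_sub, hsub, add_sub_cancel_right]
  exact enorm_convolution_le_eLpNorm_two_mul ((hψ n).sub hφ) hK x

end Group

variable {E : Type*} [NormedAddCommGroup E] [InnerProductSpace ℝ E] [FiniteDimensional ℝ E]
  [MeasurableSpace E] [BorelSpace E]

lemma eLpNorm_two_fourier {F : Type*} [NormedAddCommGroup F] [InnerProductSpace ℂ F]
    [CompleteSpace F] (f : 𝓢(E, F)) :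
    eLpNorm (𝓕 f : 𝓢(E, F)) 2 volume = eLpNorm f 2 volume := by
  have h := SchwartzMap.norm_fourier_toL2_eq f
  rw [SchwartzMap.norm_toLp, SchwartzMap.norm_toLp] at h
  have hfourier := (𝓕 f : 𝓢(E, F)).memLp 2 volume
  exact (ENNReal.toReal_eq_toReal_iff' hfourier.2.ne (f.memLp 2 volume).2.ne).1 h

lemma coe_schwartzMap_convolution (f K : 𝓢(E, ℂ)) :
    ⇑(SchwartzMap.convolution (ContinuousLinearMap.mul ℂ ℂ) f K) =
      f ⋆[ContinuousLinearMap.mul ℂ ℂ] K :=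
  funext fun x => SchwartzMap.convolution_apply _ f K x

lemma continuous_schwartzMap_convolution (f K : 𝓢(E, ℂ)) :
    Continuous (f ⋆[ContinuousLinearMap.mul ℂ ℂ] K) := by
  rw [← coe_schwartzMap_convolution]
  exact SchwartzMap.continuous _

lemma fourierInv_mul_eq_convolution (f g : 𝓢(E, ℂ)) :
    (𝓕⁻ fun ξ => f ξ * g ξ) =
      (𝓕⁻ f : 𝓢(E, ℂ)) ⋆[ContinuousLinearMap.mul ℂ ℂ] (𝓕⁻ g : 𝓢(E, ℂ)) := by
  have hmul : (fun ξ => f ξ * g ξ) =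
      (𝓕 (SchwartzMap.convolution (ContinuousLinearMap.mul ℂ ℂ) (𝓕⁻ f) (𝓕⁻ g)) :
        𝓢(E, ℂ)) := by
    ext ξ
    rw [SchwartzMap.fourier_convolution, FourierTransform.fourier_fourierInv_eq,
      FourierTransform.fourier_fourierInv_eq, SchwartzMap.pairing_apply_apply,
      ContinuousLinearMap.mul_apply']
  rw [hmul, ← SchwartzMap.fourierInv_coe, FourierTransform.fourierInv_fourier_eq,
    coe_schwartzMap_convolution]

variable {K : 𝓢(E, ℂ)}

lemma eLpNorm_two_convolution_schwartz_le (hK : ∀ ξ, ‖𝓕 K ξ‖ ≤ 1) (f : 𝓢(E, ℂ)) :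
    eLpNorm (f ⋆[ContinuousLinearMap.mul ℂ ℂ] K) 2 volume ≤ eLpNorm f 2 volume := by
  rw [← coe_schwartzMap_convolution, ← eLpNorm_two_fourier, ← eLpNorm_two_fourier f,
    SchwartzMap.fourier_convolution]
  refine eLpNorm_mono fun ξ => ?_
  rw [SchwartzMap.pairing_apply_apply, ContinuousLinearMap.mul_apply', norm_mul]
  exact mul_le_of_le_one_right (norm_nonneg _) (hK ξ)

lemma exists_schwartz_tendsto_eLpNorm_sub {φ : E → ℂ} {p : ℝ≥0∞} [Fact (1 ≤ p)] (hp : p ≠ ⊤)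
    (hφ : MemLp φ p volume) :
    ∃ ψ : ℕ → 𝓢(E, ℂ), Tendsto (fun n => eLpNorm (⇑(ψ n) - φ) p volume) atTop (𝓝 0) := by
  have happrox (n : ℕ) : ∃ ψ : 𝓢(E, ℂ),
      eLpNorm (φ - ⇑ψ) p volume ≤ ENNReal.ofReal (1 / ((n : ℝ) + 1)) := by
    obtain ⟨g, hg_supp, hg_smooth, hg⟩ := hφ.exist_eLpNorm_sub_le hp Fact.out
      (Nat.one_div_pos_of_nat (n := n))
    exact ⟨hg_supp.toSchwartzMap hg_smooth, hg⟩
  choose ψ hψ using happrox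
  refine ⟨ψ, tendsto_of_tendsto_of_tendsto_of_le_of_le tendsto_const_nhds ?_
    (fun n => zero_le) fun n => (eLpNorm_sub_comm _ _ _ _).trans_le (hψ n)⟩
  simpa using ENNReal.tendsto_ofReal (tendsto_one_div_add_atTop_nhds_zero_nat (𝕜 := ℝ))

lemma eLpNorm_two_convolution_le (hK : ∀ ξ, ‖𝓕 K ξ‖ ≤ 1) {φ : E → ℂ} (hφ : MemLp φ 2 volume) :
    eLpNorm (φ ⋆[ContinuousLinearMap.mul ℂ ℂ] K) 2 volume ≤ eLpNorm φ 2 volume := by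
  obtain ⟨ψ, hψ⟩ := exists_schwartz_tendsto_eLpNorm_sub (by simp) hφ
  have hψ_mem (n : ℕ) : MemLp (ψ n) 2 volume := (ψ n).memLp 2 volume
  have hlim := tendsto_convolution_of_tendsto_eLpNorm_two hφ hψ_mem (K.memLp 2 volume) hψ
  have hbound (n : ℕ) : eLpNorm (ψ n ⋆[ContinuousLinearMap.mul ℂ ℂ] K) 2 volume ≤
      eLpNorm φ 2 volume + eLpNorm (⇑(ψ n) - φ) 2 volume :=
    calc eLpNorm (ψ n ⋆[ContinuousLinearMap.mul ℂ ℂ] K) 2 volume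
        ≤ eLpNorm (ψ n) 2 volume := eLpNorm_two_convolution_schwartz_le hK (ψ n)
      _ = eLpNorm (φ + (⇑(ψ n) - φ)) 2 volume := by rw [add_sub_cancel]
      _ ≤ _ := eLpNorm_add_le hφ.1 ((hψ_mem n).sub hφ).1 one_le_two
  have hlim_bound := hψ.const_add (eLpNorm φ 2 volume)
  rw [add_zero] at hlim_bound
  calc eLpNorm (φ ⋆[ContinuousLinearMap.mul ℂ ℂ] K) 2 volume
      ≤ liminf (fun n => eLpNorm (ψ n ⋆[ContinuousLinearMap.mul ℂ ℂ] K) 2 volume) atTop :=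
        Lp.eLpNorm_lim_le_liminf_eLpNorm
          (fun n => (continuous_schwartzMap_convolution (ψ n) K).aestronglyMeasurable) _
          (.of_forall hlim)
    _ ≤ liminf (fun n => eLpNorm φ 2 volume + eLpNorm (⇑(ψ n) - φ) 2 volume) atTop :=
        liminf_le_liminf (.of_forall hbound)
    _ = eLpNorm φ 2 volume := hlim_bound.liminf_eq

theorem eLpNorm_convolution_le (hK : ∀ ξ, ‖𝓕 K ξ‖ ≤ 1) {A : ℝ} (hA : 0 < A)
    (hKA : ∀ x, ‖K x‖ ≤ A) (f : 𝓢(E, ℂ)) {p p' : ℝ≥0∞} (hp : 2 ≤ p) [p.HolderConjugate p'] :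
    eLpNorm (f ⋆[ContinuousLinearMap.mul ℂ ℂ] K) p volume ≤
      ENNReal.ofReal (2 * A ^ (1 - 2 / p.toReal)) * eLpNorm f p' volume := by
  have hadd (φ ψ : E → ℂ) (hφ : MemLp φ 2 volume) (hψ : MemLp ψ 2 volume) (y : E) :
      ‖((φ + ψ) ⋆[ContinuousLinearMap.mul ℂ ℂ] K) y‖ ≤
        ‖(φ ⋆[ContinuousLinearMap.mul ℂ ℂ] K) y‖ + ‖(ψ ⋆[ContinuousLinearMap.mul ℂ ℂ] K) y‖ := by
    rw [(convolutionExistsAt_of_memLp_two hφ (K.memLp 2 volume) y).add_distrib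
      (convolutionExistsAt_of_memLp_two hψ (K.memLp 2 volume) y)]
    exact norm_add_le _ _
  exact eLpNorm_le_of_truncation (T := fun φ => φ ⋆[ContinuousLinearMap.mul ℂ ℂ] K) hadd
    (fun _ => eLpNorm_two_convolution_le hK) (fun _ _ => enorm_convolution_le_mul_lintegral hKA) hA
    f.continuous.stronglyMeasurable (f.memLp 2 volume)
    (continuous_schwartzMap_convolution f K).stronglyMeasurable hp

theorem eLpNorm_fourierInv_mul_le {m : 𝓢(E, ℂ)} (hm : ∀ ξ, ‖m ξ‖ ≤ 1) {A : ℝ} (hA : 0 < A)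
    (hmA : ∀ x, ‖𝓕⁻ (⇑m) x‖ ≤ A) (f : 𝓢(E, ℂ)) {p p' : ℝ≥0∞} (hp : 2 ≤ p)
    [p.HolderConjugate p'] :
    eLpNorm (𝓕⁻ fun ξ => f ξ * m ξ) p volume ≤
      ENNReal.ofReal (2 * A ^ (1 - 2 / p.toReal)) * eLpNorm (𝓕⁻ (⇑f)) p' volume := by
  rw [fourierInv_mul_eq_convolution, ← SchwartzMap.fourierInv_coe]
  refine eLpNorm_convolution_le (fun ξ => ?_) hA (fun x => ?_) _ hp
  · rw [FourierTransform.fourier_fourierInv_eq]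
    exact hm ξ
  · rw [SchwartzMap.fourierInv_coe]
    exact hmA x

end Convolution

section Cutoff

variable {r R L : ℝ}

lemma eq_zero_of_notMem_Icc_ceil {F : Type*} [Zero F] {ζ : ℝ → F} (hζ : ∀ s, r < |s| → ζ s = 0)
    {s : ℝ} (hs : |s| ≤ R) {ν : ℤ} (hν : ν ∉ Finset.Icc (-⌈R + r⌉) ⌈R + r⌉) : ζ (s - ν) = 0 := by
  refine hζ _ (lt_of_not_ge fun hr => hν ?_)
  have hν_le : |ν| ≤ ⌈R + r⌉ := by
    have := abs_sub_abs_le_abs_sub (ν : ℝ) s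
    rw [abs_sub_comm] at this
    exact_mod_cast (show ((|ν| : ℤ) : ℝ) ≤ R + r by push_cast; linarith).trans (Int.le_ceil _)
  exact Finset.mem_Icc.2 (abs_le.1 hν_le)

lemma contDiff_tsum_sub_intCast {F : Type*} [NormedAddCommGroup F] [NormedSpace ℝ F] {ζ : ℝ → F}
    {n : WithTop ℕ∞} (hζ : ContDiff ℝ n ζ) (hζ_zero : ∀ s, r < |s| → ζ s = 0) :
    ContDiff ℝ n fun s => ∑' ν : ℤ, ζ (s - ν) := by
  refine contDiff_iff_contDiffAt.2 fun s₀ => ?_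
  have hnhds : ∀ᶠ s in 𝓝 s₀, |s| < |s₀| + 1 :=
    continuous_abs.continuousAt.eventually_lt continuousAt_const (by simp)
  have hfinite : (fun s => ∑' ν : ℤ, ζ (s - ν)) =ᶠ[𝓝 s₀]
      fun s => ∑ ν ∈ Finset.Icc (-⌈|s₀| + 1 + r⌉) ⌈|s₀| + 1 + r⌉, ζ (s - ν) := by
    filter_upwards [hnhds] with s hs
    exact tsum_eq_sum fun ν hν => eq_zero_of_notMem_Icc_ceil hζ_zero hs.le hν
  refine ContDiffAt.congr_of_eventuallyEq (ContDiff.contDiffAt ?_) hfinite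
  exact ContDiff.sum fun ν _ => hζ.comp (contDiff_id.sub contDiff_const)

lemma tsum_sub_intCast_pos {ζ : ℝ → ℝ} (hζ_nonneg : ∀ s, 0 ≤ ζ s)
    (hζ_pos : ∀ s, |s| ≤ 1 / 2 → 0 < ζ s) (hζ_zero : ∀ s, r < |s| → ζ s = 0) (s : ℝ) :
    0 < ∑' ν : ℤ, ζ (s - ν) :=
  (summable_of_ne_finset_zero fun _ hν => eq_zero_of_notMem_Icc_ceil hζ_zero le_rfl hν).tsum_pos
    (fun _ => hζ_nonneg _) (round s) (hζ_pos _ (abs_sub_round s))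

lemma contDiff_zetaNorm {ζ : ℝ → ℝ} {n : WithTop ℕ∞} (hζ : ContDiff ℝ n ζ)
    (hζ_nonneg : ∀ s, 0 ≤ ζ s) (hζ_pos : ∀ s, |s| ≤ 1 / 2 → 0 < ζ s)
    (hζ_zero : ∀ s, r < |s| → ζ s = 0) : ContDiff ℝ n (zetaNorm ζ) :=
  hζ.div (contDiff_tsum_sub_intCast hζ hζ_zero) fun s =>
    (tsum_sub_intCast_pos hζ_nonneg hζ_pos hζ_zero s).ne'

lemma exists_contDiff_eq_one_tsupport_subset (hr : 0 < r) (hrR : r < R) :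
    ∃ χ : ℝ → ℂ, ContDiff ℝ ∞ χ ∧ tsupport χ ⊆ Set.Ioo (-R) R ∧ (∀ v, ‖χ v‖ ≤ 1) ∧
      ∀ v, |v| ≤ r → χ v = 1 := by
  let φ : ContDiffBump (0 : ℝ) := ⟨r, (r + R) / 2, hr, by linarith⟩
  have hsupp : tsupport (fun v => (φ v : ℂ)) ⊆ tsupport φ :=
    closure_mono fun v hv => by simpa using hv
  refine ⟨fun v => φ v, ofRealCLM.contDiff.comp φ.contDiff, hsupp.trans ?_, fun v => ?_,
    fun v hv => ?_⟩
  · rw [φ.tsupport_eq, Real.closedBall_eq_Icc]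
    exact Set.Icc_subset_Ioo (by simp only [φ]; linarith) (by simp only [φ]; linarith)
  · rw [norm_real, Real.norm_of_nonneg φ.nonneg]
    exact φ.le_one
  · exact ofReal_eq_one.2 (φ.one_of_mem_closedBall (by simpa using hv))

variable {E : Type*} [NormedAddCommGroup E] [InnerProductSpace ℝ E] {χ : ℝ → ℂ} {G : E → ℂ}

lemma contDiff_mul_comp_norm_sub (hχ : ContDiff ℝ ∞ χ) (hχ_zero : ∀ v, r < |v| → χ v = 0)
    (hrL : r < L) (hG : ∀ ξ ≠ 0, ContDiffAt ℝ ∞ G ξ) :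
    ContDiff ℝ ∞ fun ξ => G ξ * χ (‖ξ‖ - L) := by
  refine contDiff_iff_contDiffAt.2 fun ξ => ?_
  rcases eq_or_ne ξ 0 with rfl | hξ
  · have hnhds : ∀ᶠ ξ : E in 𝓝 0, ‖ξ‖ < L - r :=
      continuous_norm.continuousAt.eventually_lt continuousAt_const (by simpa using hrL)
    refine (contDiffAt_const (c := (0 : ℂ))).congr_of_eventuallyEq ?_
    filter_upwards [hnhds] with ξ hξ
    rw [hχ_zero _ (lt_abs.2 (.inr (by linarith))), mul_zero]
  · exact (hG ξ hξ).mul (hχ.contDiffAt.comp ξ ((contDiffAt_norm ℝ hξ).sub contDiffAt_const))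

lemma exists_schwartzMap_eq_mul_comp_norm_sub [FiniteDimensional ℝ E] (hχ : ContDiff ℝ ∞ χ)
    (hχ_zero : ∀ v, r < |v| → χ v = 0) (hrL : r < L) (hG : ∀ ξ ≠ 0, ContDiffAt ℝ ∞ G ξ) :
    ∃ g : SchwartzMap E ℂ, ⇑g = fun ξ => G ξ * χ (‖ξ‖ - L) := by
  have hsupp : HasCompactSupport fun ξ => G ξ * χ (‖ξ‖ - L) := by
    refine HasCompactSupport.intro (isCompact_closedBall 0 (L + r)) fun ξ hξ => ?_
    rw [mem_closedBall_zero_iff, not_le] at hξ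
    rw [hχ_zero _ (lt_abs.2 (.inl (by linarith))), mul_zero]
  exact ⟨hsupp.toSchwartzMap (contDiff_mul_comp_norm_sub hχ hχ_zero hrL hG), rfl⟩

lemma contDiffAt_cexp_mul_norm (T : ℝ) {ξ : E} (hξ : ξ ≠ 0) :
    ContDiffAt ℝ ∞ (fun ξ : E => cexp (I * ((T * ‖ξ‖ : ℝ) : ℂ))) ξ :=
  (contDiffAt_const.mul (ofRealCLM.contDiff.contDiffAt.comp ξ
    (contDiffAt_const.mul (contDiffAt_norm ℝ hξ)))).cexp

variable [FiniteDimensional ℝ E] [MeasurableSpace E] [BorelSpace E]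

/-- The cutoff `χ` is equal to `1` where `η` lives, so the evolution of a wave packet localized by
`η` is its convolution with the inverse Fourier transform of `halfWaveSymbol E χ L T`. -/
lemma eLpNorm_fourierInv_halfWaveSymbol_mul_le {η : ℝ → ℂ} {r' A T : ℝ} (hη : ContDiff ℝ ∞ η)
    (hη_zero : ∀ v, r < |v| → η v = 0) (hrL : r < L) (hχ : ContDiff ℝ ∞ χ)
    (hχ_zero : ∀ v, r' < |v| → χ v = 0) (hr'L : r' < L) (hχ_one : ∀ v, |v| ≤ r → χ v = 1)
    (hχ_le : ∀ v, ‖χ v‖ ≤ 1) (hA : 0 < A) (hkernel : ∀ x, ‖𝓕⁻ (halfWaveSymbol E χ L T) x‖ ≤ A)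
    (f : SchwartzMap E ℂ) {p p' : ℝ≥0∞} (hp : 2 ≤ p) [p.HolderConjugate p'] :
    eLpNorm (𝓕⁻ fun ξ : E => halfWaveSymbol E η L T ξ * 𝓕 (⇑f) ξ) p volume ≤
      ENNReal.ofReal (2 * A ^ (1 - 2 / p.toReal)) *
        eLpNorm (𝓕⁻ fun ξ : E => η (‖ξ‖ - L) * 𝓕 (⇑f) ξ) p' volume := by
  obtain ⟨g, hg⟩ : ∃ g : SchwartzMap E ℂ, ⇑g = fun ξ => 𝓕 (⇑f) ξ * η (‖ξ‖ - L) := by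
    refine exists_schwartzMap_eq_mul_comp_norm_sub hη hη_zero hrL fun ξ _ => ?_
    rw [← SchwartzMap.fourier_coe]
    exact (SchwartzMap.smooth _ _).contDiffAt
  obtain ⟨m, hm⟩ : ∃ m : SchwartzMap E ℂ, ⇑m = halfWaveSymbol E χ L T :=
    exists_schwartzMap_eq_mul_comp_norm_sub hχ hχ_zero hr'L
      fun ξ hξ => contDiffAt_cexp_mul_norm T hξ
  have hleft : (fun ξ : E => halfWaveSymbol E η L T ξ * 𝓕 (⇑f) ξ) = fun ξ => g ξ * m ξ := by
    ext ξ
    simp only [hg, hm, halfWaveSymbol]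
    rcases le_or_gt |‖ξ‖ - L| r with hξ | hξ
    · rw [hχ_one _ hξ]
      ring
    · simp [hη_zero _ hξ]
  have hright : (fun ξ : E => η (‖ξ‖ - L) * 𝓕 (⇑f) ξ) = g := by
    simp_rw [hg, mul_comm]
  rw [hleft, hright]
  refine eLpNorm_fourierInv_mul_le (fun ξ => ?_) hA (by rwa [hm]) g hp
  rw [hm, norm_halfWaveSymbol]
  exact hχ_le _

end Cutoff

lemma mul_rpow_le_max_one_mul_rpow {C τ b θ : ℝ} (hτ : 0 < τ) (hθ : θ ≤ 1) :
    (max 1 C * τ ^ b) ^ θ ≤ max 1 C * τ ^ (b * θ) := by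
  have hC : 1 ≤ max 1 C := le_max_left _ _
  rw [Real.mul_rpow (by positivity) (by positivity), ← Real.rpow_mul hτ.le]
  gcongr
  exact Real.rpow_le_self_of_one_le hC hθ

theorem improved_dispersive_estimate_annulus_general {E : Type*} [NormedAddCommGroup E]
    [InnerProductSpace ℝ E] [FiniteDimensional ℝ E] [MeasurableSpace E] [BorelSpace E]
    {η : ℝ → ℂ} {r R c : ℝ} (hη : ContDiff ℝ ∞ η) (hη_zero : ∀ s, r < |s| → η s = 0)
    (hr : 0 < r) (hrR : r < R) (hc : 0 < c) :
    ∃ C > 0, ∀ f : SchwartzMap E ℂ, ∀ L T : ℝ, R ≤ L → c * L ≤ |T| →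
      ∀ p p' : ℝ≥0∞, 2 ≤ p → 1 / p + 1 / p' = 1 →
        eLpNorm (𝓕⁻ fun ξ : E => halfWaveSymbol E η L T ξ * 𝓕 (⇑f) ξ) p volume ≤
          ENNReal.ofReal (C * (|T| / L) ^
            (-(((Module.finrank ℝ E : ℝ) - 1) / 2) * (1 - 2 / p.toReal))) *
            eLpNorm (𝓕⁻ fun ξ : E => η (‖ξ‖ - L) * 𝓕 (⇑f) ξ) p' volume := by
  obtain ⟨r', hrr', hr'R⟩ := exists_between hrR
  obtain ⟨χ, hχ, hχ_supp, hχ_le, hχ_one⟩ := exists_contDiff_eq_one_tsupport_subset hr hrr'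
  have hχ_zero (v : ℝ) (hv : r' < |v|) : χ v = 0 :=
    image_eq_zero_of_notMem_tsupport fun h => hv.not_gt (abs_lt.2 (hχ_supp h))
  obtain ⟨C, -, hC⟩ :=
    exists_norm_fourierInv_halfWaveSymbol_le (E := E) hχ hχ_supp (hr.trans hrr') hr'R hc
  refine ⟨2 * max 1 C, by positivity, fun f L T hL hT p p' hp hpp' => ?_⟩
  have : p.HolderConjugate p' := ENNReal.holderConjugate_iff.2 (by simpa using hpp')
  have hL₀ : 0 < L := (hr.trans hrR).trans_le hL
  have hτ : 0 < |T| / L := div_pos (lt_of_lt_of_le (by positivity) hT) hL₀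
  have hkernel (x : E) : ‖𝓕⁻ (halfWaveSymbol E χ L T) x‖ ≤
      max 1 C * (|T| / L) ^ (-(((Module.finrank ℝ E : ℝ) - 1) / 2)) := by
    refine (hC L T hL hT x).trans ?_
    gcongr
    exact le_max_right _ _
  refine (eLpNorm_fourierInv_halfWaveSymbol_mul_le (p' := p') hη hη_zero (hrR.trans_le hL) hχ
    hχ_zero (hr'R.trans_le hL) hχ_one hχ_le (by positivity) hkernel f hp).trans ?_
  rw [mul_assoc 2]
  gcongr
  exact mul_rpow_le_max_one_mul_rpow hτ (sub_le_self 1 (by positivity))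

/-- Variant of the Klainerman–Tataru improved dispersive estimate: for `|t| ≥ cλ` and
`λ ≥ κ + 1`, `‖e^{±it|∇|} Q_{κ,λ} f‖_{L^p} ≤ C (|t|/λ)^{−((d−1)/2)(1−2/p)} ‖Q_{κ,λ} f‖_{L^{p'}}`
for all `p ∈ [2,∞]` with conjugate exponent `p'`. -/
theorem improved_dispersive_estimate_annulus (d : ℕ) (hd : 2 ≤ d) (c κ : ℝ) (hc : 0 < c)
    (hκ : 1 ≤ κ)
    (ζ : ℝ → ℝ) (hζ_smooth : ContDiff ℝ (⊤ : ℕ∞) ζ) (hζ_nonneg : ∀ s, 0 ≤ ζ s)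
    (hζ_one : ∀ s : ℝ, |s| ≤ 2 / 3 * κ → ζ s = 1)
    (hζ_zero : ∀ s : ℝ, 3 / 4 * κ < |s| → ζ s = 0) :
    ∃ C > 0, ∀ f : SchwartzMap (EuclideanSpace ℝ (Fin d)) ℂ,
      ∀ lam : ℕ, κ + 1 ≤ (lam : ℝ) → ∀ t : ℝ, c * lam ≤ |t| → ∀ ε : ℝ, ε = 1 ∨ ε = -1 →
      ∀ p p' : ℝ≥0∞, 2 ≤ p → 1 / p + 1 / p' = 1 →
        eLpNorm
            (𝓕⁻ fun ξ : EuclideanSpace ℝ (Fin d) =>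
              Complex.exp (Complex.I * ((ε * t * ‖ξ‖ : ℝ) : ℂ)) *
                ((zetaAnn d ζ lam ξ : ℝ) : ℂ) * 𝓕 (⇑f) ξ)
            p volume
          ≤ ENNReal.ofReal
              (C * (|t| / lam) ^ (-(((d : ℝ) - 1) / 2) * (1 - 2 / p.toReal))) *
            eLpNorm
              (𝓕⁻ fun ξ : EuclideanSpace ℝ (Fin d) =>
                ((zetaAnn d ζ lam ξ : ℝ) : ℂ) * 𝓕 (⇑f) ξ)
              p' volume := by
  have hr : 0 < 3 / 4 * κ := by positivity
  have hζ_pos (s : ℝ) (hs : |s| ≤ 1 / 2) : 0 < ζ s := by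
    rw [hζ_one s (by linarith)]
    exact one_pos
  have hη : ContDiff ℝ ∞ fun s => (zetaNorm ζ s : ℂ) :=
    ofRealCLM.contDiff.comp (contDiff_zetaNorm hζ_smooth hζ_nonneg hζ_pos hζ_zero)
  have hη_zero (s : ℝ) (hs : 3 / 4 * κ < |s|) : (zetaNorm ζ s : ℂ) = 0 := by
    simp [zetaNorm, hζ_zero s hs]
  obtain ⟨C, hC, h⟩ := improved_dispersive_estimate_annulus_general
    (E := EuclideanSpace ℝ (Fin d)) hη hη_zero hr (by linarith : 3 / 4 * κ < κ + 1) hc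
  refine ⟨C, hC, fun f lam hlam t ht ε hε p p' hp hpp' => ?_⟩
  have habs : |ε * t| = |t| := by rcases hε with rfl | rfl <;> simp
  have hestimate := h f lam (ε * t) hlam (by rwa [habs]) p p' hp hpp'
  rwa [habs, finrank_euclideanSpace_fin] at hestimate
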